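/- arXiv:0803.2428 — 3 statements merged into one kernel-verified Lean document; each statement's English description precedes it below -/
import Mathlib

section
/- If U ⊆ 𝔸 is an upper generating set, then 𝒞⁻(U) := 𝔸 \ (𝒰ℒ(U) ∪ ℒ𝒰ℒ(U)) is a circloid. Similarly, if L ⊆ 𝔸 is a lower generating set, then 𝒞⁺(L) := 𝔸 \ (ℒ𝒰(L) ∪ 𝒰ℒ𝒰(L)) is a circloid. -/
open Filter Topology

local notation "⟪" x ", " y "⟫" => @inner ℝ _ _ x y

noncomputable section

/-- The open annulus `𝔸 = 𝕋¹ × ℝ`. -/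
abbrev Ann := AddCircle (1 : ℝ) × ℝ

/-- `S ⊆ 𝔸` is unbounded from above in the `ℝ`-coordinate. -/
def UnbAbove (S : Set Ann) : Prop := ¬ BddAbove (Prod.snd '' S)

/-- `S ⊆ 𝔸` is unbounded from below in the `ℝ`-coordinate. -/
def UnbBelow (S : Set Ann) : Prop := ¬ BddBelow (Prod.snd '' S)

/-- `S ⊆ 𝔸` is bounded (equivalently, bounded in the `ℝ`-coordinate). -/
def BoundedA (S : Set Ann) : Prop := BddAbove (Prod.snd '' S) ∧ BddBelow (Prod.snd '' S)

/-- `E ⊆ 𝔸` is essential: no connected component of its complement is unbounded both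
above and below. -/
def EssentialA (E : Set Ann) : Prop :=
  ∀ x ∈ Eᶜ, ¬ (UnbAbove (connectedComponentIn Eᶜ x) ∧ UnbBelow (connectedComponentIn Eᶜ x))

/-- An annular continuum: a compact connected set whose complement has exactly two
connected components, both unbounded. -/
def IsAnnularContinuum (E : Set Ann) : Prop :=
  IsCompact E ∧ IsConnected E ∧
  (∀ x ∈ Eᶜ, ¬ BoundedA (connectedComponentIn Eᶜ x)) ∧
  ∃ x y, x ∈ Eᶜ ∧ y ∈ Eᶜ ∧ connectedComponentIn Eᶜ x ≠ connectedComponentIn Eᶜ y ∧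
    ∀ z ∈ Eᶜ, connectedComponentIn Eᶜ z = connectedComponentIn Eᶜ x ∨
      connectedComponentIn Eᶜ z = connectedComponentIn Eᶜ y

/-- A circloid: an annular continuum containing no strictly smaller annular continuum. -/
def IsCircloidA (C : Set Ann) : Prop :=
  IsAnnularContinuum C ∧ ∀ E ⊆ C, IsAnnularContinuum E → E = C

/-- `ℒ(U)`: the connected component of `𝔸 \ cl(U)` unbounded from below (for a
generating set it is unique; in general we take the union of all components of
`𝔸 \ cl(U)` unbounded from below). -/
def lowerComp (U : Set Ann) : Set Ann :=
  {z | z ∈ (closure U)ᶜ ∧ UnbBelow (connectedComponentIn (closure U)ᶜ z)}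

/-- `𝒰(L)`: the connected component of `𝔸 \ cl(L)` unbounded from above. -/
def upperComp (L : Set Ann) : Set Ann :=
  {z | z ∈ (closure L)ᶜ ∧ UnbAbove (connectedComponentIn (closure L)ᶜ z)}

/-- An upper generating set: bounded from below with essential closure. -/
def UpperGen (U : Set Ann) : Prop := BddBelow (Prod.snd '' U) ∧ EssentialA (closure U)

/-- A lower generating set: bounded from above with essential closure. -/
def LowerGen (L : Set Ann) : Prop := BddAbove (Prod.snd '' L) ∧ EssentialA (closure L)

/-- `𝒞⁻(U) = 𝔸 \ (𝒰ℒ(U) ∪ ℒ𝒰ℒ(U))`. -/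
def Cminus (U : Set Ann) : Set Ann :=
  (upperComp (lowerComp U) ∪ lowerComp (upperComp (lowerComp U)))ᶜ

/-- `𝒞⁺(L) = 𝔸 \ (ℒ𝒰(L) ∪ 𝒰ℒ𝒰(L))`. -/
def Cplus (L : Set Ann) : Set Ann :=
  (lowerComp (upperComp L) ∪ upperComp (lowerComp (upperComp L)))ᶜ

open Set

lemma const_lift {X : Type*} [TopologicalSpace X] {S : Set X} (hS : IsPreconnected S) {g : X → ℝ}
    (hg : ContinuousOn g S) (h0 : ∀ x ∈ S, ((g x : ℝ) : AddCircle (2 : ℝ)) = 0)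
    {a b : X} (ha : a ∈ S) (hb : b ∈ S) : g a = g b := by
  have hoc : (g '' S).OrdConnected := (hS.image g hg).ordConnected
  have key : ∀ x ∈ S, ∀ y ∈ S, ¬ g x < g y := by
    intro x hx y hy hlt
    obtain ⟨m, hm⟩ := AddCircle.coe_eq_zero_iff (2 : ℝ) |>.1 (h0 x hx)
    obtain ⟨n, hn⟩ := AddCircle.coe_eq_zero_iff (2 : ℝ) |>.1 (h0 y hy)
    simp only [zsmul_eq_mul] at hm hn
    have hmn : m < n := by
      have : (m : ℝ) < n := by linarith
      exact_mod_cast this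
    have hmn' : (m : ℝ) + 1 ≤ n := by exact_mod_cast hmn
    have : (2 * m + 1 : ℝ) ∈ g '' S :=
      hoc.out (mem_image_of_mem g hx) (mem_image_of_mem g hy) ⟨by linarith, by linarith⟩
    obtain ⟨z, hz, hgz⟩ := this
    obtain ⟨k, hk⟩ := AddCircle.coe_eq_zero_iff (2 : ℝ) |>.1 (h0 z hz)
    simp only [zsmul_eq_mul] at hk
    have : (k * 2 : ℝ) = 2 * m + 1 := by linarith
    have : k * 2 = 2 * m + 1 := by exact_mod_cast this
    omega
  exact le_antisymm (not_lt.1 (key b hb a ha)) (not_lt.1 (key a ha b hb))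

lemma two_one : ((1 : ℝ) : AddCircle (2 : ℝ)) = ((-1 : ℝ) : AddCircle (2 : ℝ)) := by
  rw [← sub_eq_zero, ← AddCircle.coe_sub, AddCircle.coe_eq_zero_iff]
  exact ⟨1, by norm_num⟩

def prAnn : ℝ × ℝ → Ann := Prod.map (fun x : ℝ => (x : AddCircle (1 : ℝ))) id

lemma prAnn_oq : IsOpenQuotientMap prAnn :=
  IsOpenQuotientMap.prodMap QuotientAddGroup.isOpenQuotientMap_mk IsOpenQuotientMap.id

instance : SimplyConnectedSpace (ℝ × ℝ) := inferInstance

lemma unicoh {F G : Set Ann} (hF : IsClosed F) (hG : IsClosed G) (hFG : F ∪ G = univ)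
    (cF : IsPreconnected F) (cG : IsPreconnected G) {c : ℝ} (hc : {p : Ann | c < p.2} ⊆ F) :
    IsPreconnected (F ∩ G) := by
  classical
  rw [isPreconnected_closed_iff]
  intro t t' ht ht' hsub hne hne'
  by_contra hcon
  have hP : IsClosed (F ∩ G ∩ t) := (hF.inter hG).inter ht
  have hQ : IsClosed (F ∩ G ∩ t') := (hF.inter hG).inter ht'
  have hd : Disjoint (F ∩ G ∩ t) (F ∩ G ∩ t') := by
    rw [Set.disjoint_left]
    rintro x ⟨hx, hxt⟩ ⟨_, hxt'⟩
    exact hcon ⟨x, hx, hxt, hxt'⟩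
  obtain ⟨u, hu0, hu1, -⟩ := exists_continuous_zero_one_of_isClosed hP hQ hd
  let φ : Ann → AddCircle (2 : ℝ) := fun p => if p ∈ F then ((u p : ℝ) : AddCircle (2:ℝ))
    else ((-u p : ℝ) : AddCircle (2:ℝ))
  have cc : Continuous (fun x : ℝ => (x : AddCircle (2 : ℝ))) := AddCircle.continuous_mk' 2
  have φF : ∀ p ∈ F, φ p = ((u p : ℝ) : AddCircle (2:ℝ)) := fun p hp => if_pos hp
  have φG : ∀ p ∈ G, φ p = ((-u p : ℝ) : AddCircle (2:ℝ)) := by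
    intro p hp
    by_cases hpF : p ∈ F
    · rw [φF p hpF]
      rcases hsub ⟨hpF, hp⟩ with h | h
      · have := hu0 ⟨⟨hpF, hp⟩, h⟩
        simp only [Pi.zero_apply] at this
        rw [this, neg_zero]
      · have := hu1 ⟨⟨hpF, hp⟩, h⟩
        simp only [Pi.one_apply] at this
        rw [this, two_one]
    · exact if_neg hpF
  have cφ : Continuous φ := by
    rw [← continuousOn_univ, ← hFG]
    refine ContinuousOn.union_of_isClosed ?_ ?_ hF hG
    · exact (cc.comp u.continuous).continuousOn.congr φF
    · exact (cc.comp u.continuous.neg).continuousOn.congr φG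
  -- lift
  let f : C(ℝ × ℝ, AddCircle (2 : ℝ)) := ⟨φ ∘ prAnn, cφ.comp prAnn_oq.continuous⟩
  obtain ⟨e₀, he₀⟩ := QuotientAddGroup.mk_surjective (f (0, 0))
  obtain ⟨θ, ⟨-, hθ⟩, -⟩ := (AddCircle.isCoveringMap_coe (2 : ℝ)).existsUnique_continuousMap_lifts
    f (0, 0) e₀ he₀
  have hθ' : ∀ p, ((θ p : ℝ) : AddCircle (2 : ℝ)) = φ (prAnn p) := fun p => congrFun hθ p
  -- periodicity
  have hper : ∀ (k : ℤ) (x y : ℝ), prAnn (x + k, y) = prAnn (x, y) := by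
    intro k x y
    have : ((k : ℝ) : AddCircle (1 : ℝ)) = 0 := AddCircle.coe_eq_zero_iff (1 : ℝ) |>.2 ⟨k, by simp⟩
    simp [prAnn, this]
  have hθper : ∀ (k : ℤ) (x y : ℝ), θ (x + k, y) = θ (x, y) := by
    intro k x y
    have e1 : θ (x + k, y) - θ (x, y) = θ (x + k, c + 1) - θ (x, c + 1) := by
      refine const_lift (S := univ) (g := fun p : ℝ × ℝ => θ (p.1 + k, p.2) - θ (p.1, p.2))
        isPreconnected_univ (by fun_prop) ?_ (a := (x, y)) (b := (x, c + 1)) trivial trivial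
      rintro ⟨a, b⟩ -
      simp only [AddCircle.coe_sub, hθ', hper, sub_self]
    have e2 : θ (x + k, c + 1) - u (prAnn (x + k, c + 1)) = θ (x, c + 1) - u (prAnn (x, c + 1)) := by
      refine const_lift (S := range (fun s : ℝ => (s, c + 1)))
        (g := fun p : ℝ × ℝ => θ p - u (prAnn p))
        (isPreconnected_range (by fun_prop)) ?_ ?_ ⟨_, rfl⟩ ⟨_, rfl⟩
      · exact (θ.continuous.sub (u.continuous.comp prAnn_oq.continuous)).continuousOn
      · rintro _ ⟨s, rfl⟩
        have : prAnn (s, c + 1) ∈ F := hc (by simp [prAnn])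
        simp only [AddCircle.coe_sub, hθ', φF _ this, sub_self]
    rw [hper] at e2
    linarith
  let σ : Ann → ℝ × ℝ := Function.surjInv prAnn_oq.surjective
  have hσ : ∀ p, prAnn (σ p) = p := Function.surjInv_eq prAnn_oq.surjective
  let Θ : Ann → ℝ := fun p => θ (σ p)
  have hΘ : Θ ∘ prAnn = θ := by
    funext q
    have h := hσ (prAnn q)
    obtain ⟨x, y⟩ := q
    rcases hs : σ (prAnn (x, y)) with ⟨x', y'⟩
    rw [hs] at h
    simp only [prAnn, Prod.map, id, Prod.mk.injEq] at h
    obtain ⟨h1, rfl⟩ := h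
    rw [← sub_eq_zero, ← AddCircle.coe_sub, AddCircle.coe_eq_zero_iff] at h1
    obtain ⟨k, hk⟩ := h1
    have : x' = x + k := by simp at hk; linarith
    simp only [Function.comp, Θ, hs]
    rw [this, hθper]
  have cΘ : Continuous Θ := by
    rw [← prAnn_oq.continuous_comp_iff, hΘ]; exact θ.continuous
  have hΘφ : ∀ p, ((Θ p : ℝ) : AddCircle (2 : ℝ)) = φ p := fun p => by rw [hθ', hσ]
  obtain ⟨a, ha, hat⟩ := hne
  obtain ⟨b, hb, hbt⟩ := hne'
  have ua : u a = 0 := hu0 ⟨ha, hat⟩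
  have ub : u b = 1 := hu1 ⟨hb, hbt⟩
  have eF : Θ a - u a = Θ b - u b := by
    refine const_lift cF (g := fun p => Θ p - u p) (cΘ.sub u.continuous).continuousOn ?_ ha.1 hb.1
    intro p hp
    simp only [AddCircle.coe_sub, hΘφ, φF p hp, sub_self]
  have eG : Θ a - -u a = Θ b - -u b := by
    refine const_lift cG (g := fun p => Θ p - -u p)
      (cΘ.sub u.continuous.neg).continuousOn ?_ ha.2 hb.2
    intro p hp
    rw [AddCircle.coe_sub, hΘφ, φG p hp, sub_self]
  rw [ua, ub] at eF eG
  linarith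

lemma compl_comp {X : Type*} [TopologicalSpace X] [PreconnectedSpace X] [LocallyConnectedSpace X]
    {K : Set X} (hK : IsClosed K) (cK : IsConnected K) (v : X) :
    IsPreconnected (connectedComponentIn Kᶜ v)ᶜ := by
  obtain ⟨k, hk⟩ := cK.nonempty
  have hKV : K ⊆ (connectedComponentIn Kᶜ v)ᶜ :=
    fun x hx hx' => connectedComponentIn_subset _ _ hx' hx
  refine isPreconnected_of_forall k fun y hy => ?_
  by_cases hyK : y ∈ K
  · exact ⟨K, hKV, hk, hyK, cK.isPreconnected⟩
  set D := connectedComponentIn Kᶜ y with hD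
  have hyD : y ∈ D := mem_connectedComponentIn hyK
  have oD : IsOpen D := hK.isOpen_compl.connectedComponentIn
  have oV : IsOpen (connectedComponentIn Kᶜ v) := hK.isOpen_compl.connectedComponentIn
  have pD : IsPreconnected (closure D) := isPreconnected_connectedComponentIn.closure
  have hmeet : (K ∩ closure D).Nonempty := by
    by_contra hne
    have hsub : closure D ⊆ Kᶜ := fun x hx hxK => hne ⟨x, hxK, hx⟩
    have : closure D ⊆ D := pD.subset_connectedComponentIn (subset_closure hyD) hsub
    have hclopen : IsClopen D := ⟨isClosed_of_closure_subset this, oD⟩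
    rcases isClopen_iff.1 hclopen with h | h
    · rw [h] at hyD; exact hyD
    · exact connectedComponentIn_subset Kᶜ y (show k ∈ D by rw [h]; trivial) hk
  have hDV : Disjoint (connectedComponentIn Kᶜ v) D := by
    rw [Set.disjoint_left]
    intro x hx hxD
    apply hy
    rw [connectedComponentIn_eq hx, ← connectedComponentIn_eq hxD]
    exact hyD
  refine ⟨K ∪ closure D, ?_, Or.inl hk, Or.inr (subset_closure hyD), ?_⟩
  · exact union_subset hKV fun x hx hxV => (hDV.closure_right oV).le_bot ⟨hxV, hx⟩
  · obtain ⟨z, hz1, hz2⟩ := hmeet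
    exact cK.isPreconnected.union z hz1 hz2 pD
instance : LocallyPathConnectedSpace (AddCircle (1 : ℝ)) :=
  (QuotientAddGroup.isOpenQuotientMap_mk (N := AddSubgroup.zmultiples (1 : ℝ))).isQuotientMap.locallyPathConnectedSpace
instance : LocallyConnectedSpace Ann := inferInstance
instance : ConnectedSpace Ann := inferInstance

lemma low_conn (c : ℝ) : IsConnected {p : Ann | p.2 < c} := by
  have : {p : Ann | p.2 < c} = univ ×ˢ Iio c := by ext; simp
  rw [this]
  exact isConnected_univ.prod isConnected_Iio

lemma up_conn (c : ℝ) : IsConnected {p : Ann | c < p.2} := by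
  have : {p : Ann | c < p.2} = univ ×ˢ Ioi c := by ext; simp
  rw [this]
  exact isConnected_univ.prod isConnected_Ioi

lemma unbBelow_of {S : Set Ann} {c : ℝ} (h : {p : Ann | p.2 < c} ⊆ S) : UnbBelow S := by
  rintro ⟨b, hb⟩
  have := hb (mem_image_of_mem Prod.snd (h (show ((0, min b c - 1) : Ann) ∈ _ by
    show min b c - 1 < c
    linarith [min_le_right b c])))
  simp only at this
  linarith [min_le_left b c]

lemma unbAbove_of {S : Set Ann} {c : ℝ} (h : {p : Ann | c < p.2} ⊆ S) : UnbAbove S := by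
  rintro ⟨b, hb⟩
  have := hb (mem_image_of_mem Prod.snd (h (show ((0, max b c + 1) : Ann) ∈ _ by
    show c < max b c + 1
    linarith [le_max_right b c])))
  simp only at this
  linarith [le_max_left b c]

lemma UnbBelow.meet {S : Set Ann} (h : UnbBelow S) (c : ℝ) : ∃ p ∈ S, p.2 < c := by
  by_contra! hc
  exact h ⟨c, by rintro _ ⟨p, hp, rfl⟩; exact hc p hp⟩

lemma UnbAbove.meet {S : Set Ann} (h : UnbAbove S) (c : ℝ) : ∃ p ∈ S, c < p.2 := by
  by_contra! hc
  exact h ⟨c, by rintro _ ⟨p, hp, rfl⟩; exact hc p hp⟩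

lemma lowerComp_spec {S : Set Ann} (hb : BddBelow (Prod.snd '' S)) :
    ∃ z c, z ∈ (closure S)ᶜ ∧ {p : Ann | p.2 < c} ⊆ lowerComp S ∧
      lowerComp S = connectedComponentIn (closure S)ᶜ z := by
  obtain ⟨c, hc⟩ := hb
  have hsub : {p : Ann | p.2 < c} ⊆ (closure S)ᶜ := by
    rw [subset_compl_iff_disjoint_right]
    refine Disjoint.closure_right ?_ (isOpen_lt continuous_snd continuous_const)
    rw [Set.disjoint_left]
    intro p hp hpS
    exact absurd (hc (mem_image_of_mem _ hpS)) (not_le.2 hp)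
  obtain ⟨z, hz⟩ := (low_conn c).nonempty
  have hcomp : {p : Ann | p.2 < c} ⊆ connectedComponentIn (closure S)ᶜ z :=
    (low_conn c).isPreconnected.subset_connectedComponentIn hz hsub
  have heq : lowerComp S = connectedComponentIn (closure S)ᶜ z := by
    ext w
    constructor
    · rintro ⟨hw, hwu⟩
      obtain ⟨p, hp, hpc⟩ := hwu.meet c
      rw [connectedComponentIn_eq (hcomp hpc), ← connectedComponentIn_eq hp]
      exact mem_connectedComponentIn hw
    · intro hw
      refine ⟨connectedComponentIn_subset _ _ hw, ?_⟩
      rw [← connectedComponentIn_eq hw]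
      exact unbBelow_of hcomp
  exact ⟨z, c, hsub hz, heq ▸ hcomp, heq⟩

lemma upperComp_spec {S : Set Ann} (hb : BddAbove (Prod.snd '' S)) :
    ∃ z c, z ∈ (closure S)ᶜ ∧ {p : Ann | c < p.2} ⊆ upperComp S ∧
      upperComp S = connectedComponentIn (closure S)ᶜ z := by
  obtain ⟨c, hc⟩ := hb
  have hsub : {p : Ann | c < p.2} ⊆ (closure S)ᶜ := by
    rw [subset_compl_iff_disjoint_right]
    refine Disjoint.closure_right ?_ (isOpen_lt continuous_const continuous_snd)
    rw [Set.disjoint_left]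
    intro p hp hpS
    exact absurd (hc (mem_image_of_mem _ hpS)) (not_le.2 hp)
  obtain ⟨z, hz⟩ := (up_conn c).nonempty
  have hcomp : {p : Ann | c < p.2} ⊆ connectedComponentIn (closure S)ᶜ z :=
    (up_conn c).isPreconnected.subset_connectedComponentIn hz hsub
  have heq : upperComp S = connectedComponentIn (closure S)ᶜ z := by
    ext w
    constructor
    · rintro ⟨hw, hwu⟩
      obtain ⟨p, hp, hpc⟩ := hwu.meet c
      rw [connectedComponentIn_eq (hcomp hpc), ← connectedComponentIn_eq hp]
      exact mem_connectedComponentIn hw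
    · intro hw
      refine ⟨connectedComponentIn_subset _ _ hw, ?_⟩
      rw [← connectedComponentIn_eq hw]
      exact unbAbove_of hcomp
  exact ⟨z, c, hsub hz, heq ▸ hcomp, heq⟩

/-- An open connected set. -/
def OC (S : Set Ann) : Prop := IsOpen S ∧ IsConnected S

lemma OC_comp {S : Set Ann} {z : Ann} (hz : z ∈ (closure S)ᶜ) :
    OC (connectedComponentIn (closure S)ᶜ z) :=
  ⟨isClosed_closure.isOpen_compl.connectedComponentIn, isConnected_connectedComponentIn_iff.2 hz⟩

/-- A connected open set disjoint from `S` and meeting the component is inside it. -/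
lemma sub_comp {S T : Set Ann} {z x : Ann} (hT : OC T) (hd : Disjoint T S) (hx : x ∈ T)
    (hxz : x ∈ connectedComponentIn (closure S)ᶜ z) :
    T ⊆ connectedComponentIn (closure S)ᶜ z := by
  rw [connectedComponentIn_eq hxz]
  refine hT.2.isPreconnected.subset_connectedComponentIn hx ?_
  rw [subset_compl_iff_disjoint_right]
  exact hd.closure_right hT.1

lemma core {V W : Set Ann} {c d : ℝ} (hV : OC V) (hW : OC W) (hd : Disjoint V W)
    (hVc : {p : Ann | c < p.2} ⊆ V) (hWd : {p : Ann | p.2 < d} ⊆ W)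
    (cV : IsPreconnected Vᶜ) (cW : IsPreconnected Wᶜ)
    (hmax : ∀ V' W', OC V' → OC W' → Disjoint V' W' → V ⊆ V' → W ⊆ W' → V' ⊆ V ∧ W' ⊆ W) :
    IsCircloidA (V ∪ W)ᶜ := by
  obtain ⟨v, hv⟩ := hV.2.nonempty
  obtain ⟨w, hw⟩ := hW.2.nonempty
  have compV : ∀ z ∈ V, connectedComponentIn (V ∪ W) z = V := by
    intro z hz
    refine Subset.antisymm ?_
      (hV.2.isPreconnected.subset_connectedComponentIn hz subset_union_left)
    exact isPreconnected_connectedComponentIn.subset_left_of_subset_union hV.1 hW.1 hd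
      (connectedComponentIn_subset _ _) ⟨z, mem_connectedComponentIn (Or.inl hz), hz⟩
  have compW : ∀ z ∈ W, connectedComponentIn (V ∪ W) z = W := by
    intro z hz
    refine Subset.antisymm ?_
      (hW.2.isPreconnected.subset_connectedComponentIn hz subset_union_right)
    exact isPreconnected_connectedComponentIn.subset_right_of_subset_union hV.1 hW.1 hd
      (connectedComponentIn_subset _ _) ⟨z, mem_connectedComponentIn (Or.inr hz), hz⟩
  refine ⟨⟨?_, ⟨?_, ?_⟩, ?_, v, w, ?_⟩, ?_⟩
  · refine IsCompact.of_isClosed_subset (isCompact_univ.prod (isCompact_Icc (a := d) (b := c)))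
      (hV.1.union hW.1).isClosed_compl ?_
    intro p hp
    refine ⟨trivial, ?_, ?_⟩
    · by_contra h
      exact hp (Or.inr (hWd (not_le.1 h)))
    · by_contra h
      exact hp (Or.inl (hVc (not_le.1 h)))
  · rw [nonempty_compl]
    intro h
    have : IsPreconnected (univ : Set Ann) := isPreconnected_univ
    have h2 := this.subset_left_of_subset_union hV.1 hW.1 hd h.ge ⟨v, trivial, hv⟩
    exact hd.le_bot ⟨h2 (mem_univ w), hw⟩
  · rw [compl_union, inter_comm]
    refine unicoh hW.1.isClosed_compl hV.1.isClosed_compl ?_ cW cV (c := c) ?_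
    · rw [← compl_inter, inter_comm, hd.inter_eq, compl_empty]
    · exact hVc.trans (subset_compl_iff_disjoint_right.2 hd)
  · rw [compl_compl]
    rintro z (hz | hz)
    · rw [compV z hz]; exact fun h => unbAbove_of hVc h.1
    · rw [compW z hz]; exact fun h => unbBelow_of hWd h.2
  · rw [compl_compl, compV v hv, compW w hw]
    refine ⟨Or.inl hv, Or.inr hw, ?_, ?_⟩
    · rintro rfl
      exact hd.le_bot ⟨hv, hv⟩
    · rintro z (hz | hz)
      · exact Or.inl (compV z hz)
      · exact Or.inr (compW z hz)
  · rintro E hE ⟨hEc, -, hunb, x, y, hx, hy, hxy, hall⟩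
    have oE : IsOpen Eᶜ := hEc.isClosed.isOpen_compl
    have hsub : V ∪ W ⊆ Eᶜ := subset_compl_comm.1 hE
    have hvE : v ∈ Eᶜ := hsub (Or.inl hv)
    have hwE : w ∈ Eᶜ := hsub (Or.inr hw)
    have hVV : V ⊆ connectedComponentIn Eᶜ v :=
      hV.2.isPreconnected.subset_connectedComponentIn hv (subset_union_left.trans hsub)
    have hWW : W ⊆ connectedComponentIn Eᶜ w :=
      hW.2.isPreconnected.subset_connectedComponentIn hw (subset_union_right.trans hsub)
    have hdich : ∀ z ∈ Eᶜ, connectedComponentIn Eᶜ z = connectedComponentIn Eᶜ v ∨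
        connectedComponentIn Eᶜ z = connectedComponentIn Eᶜ w := by
      intro z hz
      by_cases hA : UnbAbove (connectedComponentIn Eᶜ z)
      · obtain ⟨p, hp, hpc⟩ := hA.meet c
        left
        rw [connectedComponentIn_eq hp, connectedComponentIn_eq (hVV (hVc hpc))]
      · have hB : UnbBelow (connectedComponentIn Eᶜ z) :=
          fun hB => hunb z hz ⟨not_not.1 hA, hB⟩
        obtain ⟨p, hp, hpc⟩ := hB.meet d
        right
        rw [connectedComponentIn_eq hp, connectedComponentIn_eq (hWW (hWd hpc))]
    have hne : connectedComponentIn Eᶜ v ≠ connectedComponentIn Eᶜ w := by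
      intro h
      apply hxy
      have h1 := hdich x hx
      have h2 := hdich y hy
      rw [← h, or_self] at h1 h2
      rw [h1, h2]
    have hdis : Disjoint (connectedComponentIn Eᶜ v) (connectedComponentIn Eᶜ w) := by
      rw [Set.disjoint_left]
      intro p hp hp'
      exact hne ((connectedComponentIn_eq hp).trans (connectedComponentIn_eq hp').symm)
    obtain ⟨m1, m2⟩ := hmax _ _
      ⟨oE.connectedComponentIn, isConnected_connectedComponentIn_iff.2 hvE⟩
      ⟨oE.connectedComponentIn, isConnected_connectedComponentIn_iff.2 hwE⟩ hdis hVV hWW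
    refine Subset.antisymm hE ?_
    rw [compl_subset_comm]
    intro z hz
    have hzz := mem_connectedComponentIn hz
    rcases hdich z hz with h | h
    · exact Or.inl (m1 (h ▸ hzz))
    · exact Or.inr (m2 (h ▸ hzz))

lemma bddBelow_of_disj {S T : Set Ann} {c : ℝ} (hd : Disjoint S T)
    (hc : {p : Ann | p.2 < c} ⊆ T) : BddBelow (Prod.snd '' S) := by
  refine ⟨c, ?_⟩
  rintro _ ⟨p, hp, rfl⟩
  by_contra h
  exact hd.le_bot ⟨hp, hc (not_le.1 h)⟩

lemma bddAbove_of_disj {S T : Set Ann} {c : ℝ} (hd : Disjoint S T)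
    (hc : {p : Ann | c < p.2} ⊆ T) : BddAbove (Prod.snd '' S) := by
  refine ⟨c, ?_⟩
  rintro _ ⟨p, hp, rfl⟩
  by_contra h
  exact hd.le_bot ⟨hp, hc (not_le.1 h)⟩

lemma comp_disj {S : Set Ann} {z : Ann} : Disjoint (connectedComponentIn (closure S)ᶜ z) S := by
  rw [Set.disjoint_left]
  intro x hx hxS
  exact connectedComponentIn_subset _ _ hx (subset_closure hxS)

lemma minus_part {U : Set Ann} (hU : UpperGen U) : IsCircloidA (Cminus U) := by
  obtain ⟨z, c, hz, hc, hL⟩ := lowerComp_spec hU.1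
  have hLb : BddAbove (Prod.snd '' lowerComp U) := by
    by_contra h
    exact hU.2 z hz ⟨hL ▸ h, hL ▸ unbBelow_of hc⟩
  have oL : OC (lowerComp U) := hL ▸ OC_comp hz
  unfold Cminus
  generalize lowerComp U = L at *
  obtain ⟨z₁, c₁, hz₁, hc₁, hV⟩ := upperComp_spec hLb
  have oV : OC (upperComp L) := hV ▸ OC_comp hz₁
  have dVL : Disjoint (upperComp L) L := hV ▸ comp_disj
  have pV : IsPreconnected (upperComp L)ᶜ :=
    hV ▸ compl_comp isClosed_closure oL.2.closure z₁
  have sV : ∀ T, OC T → Disjoint T L → upperComp L ⊆ T → T ⊆ upperComp L := by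
    intro T hT hd hs
    obtain ⟨x, hx⟩ := oV.2.nonempty
    have := sub_comp hT hd (hs hx) (hV ▸ hx)
    rwa [← hV] at this
  generalize upperComp L = V at *
  obtain ⟨z₂, c₂, hz₂, hc₂, hW⟩ := lowerComp_spec (bddBelow_of_disj dVL hc)
  have oW : OC (lowerComp V) := hW ▸ OC_comp hz₂
  have dWV : Disjoint (lowerComp V) V := hW ▸ comp_disj
  have pW : IsPreconnected (lowerComp V)ᶜ :=
    hW ▸ compl_comp isClosed_closure oV.2.closure z₂
  have sW : ∀ T, OC T → Disjoint T V → (T ∩ lowerComp V).Nonempty → T ⊆ lowerComp V := by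
    rintro T hT hd ⟨x, hxT, hx⟩
    have := sub_comp hT hd hxT (hW ▸ hx)
    rwa [← hW] at this
  have hLW : L ⊆ lowerComp V := by
    refine sW L oL dVL.symm ⟨(0, min c c₂ - 1), hc ?_, hc₂ ?_⟩
    · show min c c₂ - 1 < c
      linarith [min_le_left c c₂]
    · show min c c₂ - 1 < c₂
      linarith [min_le_right c c₂]
  refine core oV oW dWV.symm hc₁ hc₂ pV pW ?_
  intro V' W' oV' oW' hd hVV hWW
  refine ⟨sV V' oV' (hd.mono_right (hLW.trans hWW)) hVV, ?_⟩
  obtain ⟨x, hx⟩ := oW.2.nonempty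
  exact sW W' oW' (hd.mono_left hVV).symm ⟨x, hWW hx, hx⟩

lemma plus_part {L : Set Ann} (hL : LowerGen L) : IsCircloidA (Cplus L) := by
  obtain ⟨z, c, hz, hc, hU⟩ := upperComp_spec hL.1
  have hUb : BddBelow (Prod.snd '' upperComp L) := by
    by_contra h
    exact hL.2 z hz ⟨hU ▸ unbAbove_of hc, hU ▸ h⟩
  have oU : OC (upperComp L) := hU ▸ OC_comp hz
  unfold Cplus
  generalize upperComp L = U at *
  obtain ⟨z₁, c₁, hz₁, hc₁, hW⟩ := lowerComp_spec hUb
  have oW : OC (lowerComp U) := hW ▸ OC_comp hz₁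
  have dWU : Disjoint (lowerComp U) U := hW ▸ comp_disj
  have pW : IsPreconnected (lowerComp U)ᶜ :=
    hW ▸ compl_comp isClosed_closure oU.2.closure z₁
  have sW : ∀ T, OC T → Disjoint T U → lowerComp U ⊆ T → T ⊆ lowerComp U := by
    intro T hT hd hs
    obtain ⟨x, hx⟩ := oW.2.nonempty
    have := sub_comp hT hd (hs hx) (hW ▸ hx)
    rwa [← hW] at this
  generalize lowerComp U = W at *
  obtain ⟨z₂, c₂, hz₂, hc₂, hV⟩ := upperComp_spec (bddAbove_of_disj dWU hc)
  have oV : OC (upperComp W) := hV ▸ OC_comp hz₂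
  have dVW : Disjoint (upperComp W) W := hV ▸ comp_disj
  have pV : IsPreconnected (upperComp W)ᶜ :=
    hV ▸ compl_comp isClosed_closure oW.2.closure z₂
  have sV : ∀ T, OC T → Disjoint T W → (T ∩ upperComp W).Nonempty → T ⊆ upperComp W := by
    rintro T hT hd ⟨x, hxT, hx⟩
    have := sub_comp hT hd hxT (hV ▸ hx)
    rwa [← hV] at this
  have hUV : U ⊆ upperComp W := by
    refine sV U oU dWU.symm ⟨(0, max c c₂ + 1), hc ?_, hc₂ ?_⟩
    · show c < max c c₂ + 1
      linarith [le_max_left c c₂]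
    · show c₂ < max c c₂ + 1
      linarith [le_max_right c c₂]
  rw [union_comm]
  refine core oV oW dVW hc₂ hc₁ pV pW ?_
  intro V' W' oV' oW' hd hVV hWW
  refine ⟨?_, sW W' oW' (hd.mono_left (hUV.trans hVV)).symm hWW⟩
  obtain ⟨x, hx⟩ := oV.2.nonempty
  exact sV V' oV' (hd.mono_right hWW) ⟨x, hVV hx, hx⟩

/-- **Lemma 3.2.**  If `U` is an upper generating set then `𝒞⁻(U)` is a circloid, and
if `L` is a lower generating set then `𝒞⁺(L)` is a circloid. -/
theorem statement9 :
    (∀ U : Set Ann, UpperGen U → IsCircloidA (Cminus U)) ∧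
    (∀ L : Set Ann, LowerGen L → IsCircloidA (Cplus L)) := by
  exact ⟨fun _ h => minus_part h, fun _ h => plus_part h⟩
end
end

section
/- Let A ⊆ 𝔸 be an annular continuum with empty interior. Then 𝒞⁻(A) = 𝒞⁺(A) = ∂𝒰(A) ∩ ∂ℒ(A), and this set is the only circloid contained in A. -/
open Filter Topology

local notation "⟪" x ", " y "⟫" => @inner ℝ _ _ x y

noncomputable section

lemma lift_const {X : Type*} [TopologicalSpace X] {S : Set X} (hS : IsPreconnected S)
    {h f : X → ℝ} (hh : ContinuousOn h S) (hf : ContinuousOn f S)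
    (heq : ∀ x ∈ S, (h x : AddCircle (2 : ℝ)) = (f x : AddCircle (2 : ℝ)))
    {x y : X} (hx : x ∈ S) (hy : y ∈ S) : h x - f x = h y - f y := by
  have key := (AddCircle.isCoveringMap_coe (2 : ℝ)).eqOn_of_comp_eqOn hS hh
    (g₂ := fun z => f z + (h x - f x)) (hf.add continuousOn_const)
    (by
      intro z hz
      simp only [Function.comp, AddCircle.coe_add, AddCircle.coe_sub]
      rw [heq z hz, heq x hx]; simp) hx (by ring)
  have := key hy
  simp only at this
  linarith

lemma unicoh_s12 (P Q : Set Ann) (hPc : IsClosed P) (hQc : IsClosed Q) (hP : IsPreconnected P)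
    (hQ : IsPreconnected Q) (hPQ : P ∪ Q = Set.univ) (N : ℝ)
    (hN : ∀ x : AddCircle (1 : ℝ), (x, N) ∉ Q) : IsPreconnected (P ∩ Q) := by
  rw [isPreconnected_closed_iff]
  intro t t' ht ht' hsub hne hne'
  by_contra hemp
  have hd : Disjoint (P ∩ Q ∩ t) (P ∩ Q ∩ t') := by
    rw [Set.disjoint_left]
    rintro z ⟨h1, h2⟩ ⟨_, h3⟩
    exact hemp ⟨z, h1, h2, h3⟩
  obtain ⟨f, hf0, hf1, -⟩ := exists_continuous_zero_one_of_isClosed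
    ((hPc.inter hQc).inter ht) ((hPc.inter hQc).inter ht') hd
  classical
  let g : Ann → AddCircle (2 : ℝ) := fun z =>
    if z ∈ P then (f z : AddCircle (2 : ℝ)) else ((-f z : ℝ) : AddCircle (2 : ℝ))
  have gP : ∀ z ∈ P, g z = (f z : AddCircle (2 : ℝ)) := fun z hz => if_pos hz
  have gQ : ∀ z ∈ Q, g z = ((-f z : ℝ) : AddCircle (2 : ℝ)) := by
    intro z hz
    by_cases hzP : z ∈ P
    · rw [gP z hzP]
      rcases hsub ⟨hzP, hz⟩ with h | h
      · have : f z = 0 := hf0 ⟨⟨hzP, hz⟩, h⟩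
        simp [this]
      · have : f z = 1 := hf1 ⟨⟨hzP, hz⟩, h⟩
        have h2 : ((2 : ℝ) : AddCircle (2 : ℝ)) = 0 := AddCircle.coe_period 2
        rw [this, show (1 : ℝ) = -1 + 2 by norm_num, AddCircle.coe_add, h2]
        norm_num
    · exact if_neg hzP
  have hcoe : Continuous (fun x : ℝ => (x : AddCircle (2 : ℝ))) := AddCircle.continuous_mk' 2
  have gc : Continuous g := by
    rw [← continuousOn_univ, ← hPQ]
    refine ContinuousOn.union_of_isClosed ?_ ?_ hPc hQc
    · exact (hcoe.comp f.continuous).continuousOn.congr gP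
    · exact (hcoe.comp f.continuous.neg).continuousOn.congr gQ
  have hq : IsOpenQuotientMap (fun w : ℝ × ℝ => ((w.1 : AddCircle (1 : ℝ)), w.2)) :=
    (QuotientAddGroup.isOpenQuotientMap_mk).prodMap IsOpenQuotientMap.id
  let G : C(ℝ × ℝ, AddCircle (2 : ℝ)) := ⟨fun w => g ((w.1 : AddCircle (1 : ℝ)), w.2),
    gc.comp hq.continuous⟩
  obtain ⟨e0, he0⟩ := QuotientAddGroup.mk_surjective (G (0, 0))
  obtain ⟨H, ⟨-, hH⟩, -⟩ := (AddCircle.isCoveringMap_coe (2 : ℝ)).existsUnique_continuousMap_lifts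
    G (0, 0) e0 he0
  have hH' : ∀ x y : ℝ, (H (x, y) : AddCircle (2 : ℝ)) = g ((x : AddCircle (1 : ℝ)), y) :=
    fun x y => congrFun hH (x, y)
  have h1 : ((1 : ℝ) : AddCircle (1 : ℝ)) = 0 := AddCircle.coe_period 1
  have hNP : ∀ x : AddCircle (1 : ℝ), (x, N) ∈ P := fun x => by
    have : (x, N) ∈ P ∪ Q := by rw [hPQ]; trivial
    exact this.resolve_right (hN x)
  have hline : H (1, N) = H (0, N) := by
    have := lift_const (S := (Set.univ : Set ℝ)) isPreconnected_univ
      (h := fun x => H (x, N)) (f := fun x => f ((x : AddCircle (1 : ℝ)), N))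
      (by fun_prop) (f.continuous.comp (hq.continuous.comp
        (by fun_prop : Continuous fun x : ℝ => (x, N)))).continuousOn
      (fun x _ => by rw [hH', gP _ (hNP _)]) (Set.mem_univ 1) (Set.mem_univ 0)
    simp only [h1, AddCircle.coe_zero] at this
    linarith
  have hper : ∀ y, Function.Periodic (fun x => H (x, y)) 1 := by
    intro y x
    have := lift_const (S := (Set.univ : Set (ℝ × ℝ))) isPreconnected_univ
      (h := fun w => H (w.1 + 1, w.2)) (f := fun w => H w)
      (by fun_prop) (by fun_prop)
      (fun w _ => by
        rw [hH', show w = (w.1, w.2) from rfl, hH']; simp)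
      (Set.mem_univ (x, y)) (Set.mem_univ (0, N))
    simp only [zero_add] at this
    simp only
    linarith
  let h : Ann → ℝ := fun z => (hper z.2).lift z.1
  have hc : Continuous h := by
    rw [hq.isQuotientMap.continuous_iff]
    exact H.continuous
  have hg : ∀ z, (h z : AddCircle (2 : ℝ)) = g z := by
    intro z
    obtain ⟨w, rfl⟩ := hq.surjective z
    exact hH' w.1 w.2
  obtain ⟨a, ⟨haP, haQ⟩, hat⟩ := hne
  obtain ⟨b, ⟨hbP, hbQ⟩, hbt⟩ := hne'
  have fa : f a = 0 := hf0 ⟨⟨haP, haQ⟩, hat⟩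
  have fb : f b = 1 := hf1 ⟨⟨hbP, hbQ⟩, hbt⟩
  have e1 := lift_const hP hc.continuousOn f.continuous.continuousOn
    (fun z hz => by rw [hg, gP z hz]) haP hbP
  have e2 := lift_const hQ (f := fun z => -f z) hc.continuousOn f.continuous.neg.continuousOn
    (fun z hz => by rw [hg, gQ z hz]) haQ hbQ
  simp only [fa, fb] at e1 e2
  linarith

instance : LocallyConnectedSpace (AddCircle (1 : ℝ)) := by
  have : LocallyPathConnectedSpace (AddCircle (1 : ℝ)) :=
    (QuotientAddGroup.isOpenQuotientMap_mk).isQuotientMap.locallyPathConnectedSpace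
  infer_instance

instance inst_s12 : LocallyConnectedSpace Ann := inferInstance

structure Good (E U L : Set Ann) : Prop where
  oU : IsOpen U
  oL : IsOpen L
  disj : Disjoint U L
  un : Eᶜ = U ∪ L
  cU : IsPreconnected U
  cL : IsPreconnected L
  top : ∃ M : ℝ, ∀ z : Ann, M < z.2 → z ∈ U
  bot : ∃ m : ℝ, ∀ z : Ann, z.2 < m → z ∈ L

lemma comp_left {U L : Set Ann} (oU : IsOpen U) (oL : IsOpen L) (d : Disjoint U L)
    (cU : IsPreconnected U) {z : Ann} (hz : z ∈ U) : connectedComponentIn (U ∪ L) z = U := by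
  apply Set.Subset.antisymm
  · exact isPreconnected_connectedComponentIn.subset_left_of_subset_union oU oL d
      (connectedComponentIn_subset _ _) ⟨z, mem_connectedComponentIn (Or.inl hz), hz⟩
  · exact cU.subset_connectedComponentIn hz Set.subset_union_left

lemma comp_right {U L : Set Ann} (oU : IsOpen U) (oL : IsOpen L) (d : Disjoint U L)
    (cL : IsPreconnected L) {z : Ann} (hz : z ∈ L) : connectedComponentIn (U ∪ L) z = L := by
  rw [Set.union_comm]; exact comp_left oL oU d.symm cL hz

lemma unbAbove_of_s12 {U : Set Ann} {M : ℝ} (h : ∀ z : Ann, M < z.2 → z ∈ U) : UnbAbove U := by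
  rintro ⟨B, hB⟩
  have := hB ⟨((0 : AddCircle (1 : ℝ)), max M B + 1), h _ (by
    have := le_max_left M B; simp only; linarith), rfl⟩
  have h2 := le_max_right M B
  simp only at this
  linarith

lemma unbBelow_of_s12 {U : Set Ann} {M : ℝ} (h : ∀ z : Ann, z.2 < M → z ∈ U) : UnbBelow U := by
  rintro ⟨B, hB⟩
  have := hB ⟨((0 : AddCircle (1 : ℝ)), min M B - 1), h _ (by
    have := min_le_left M B; simp only; linarith), rfl⟩
  have h2 := min_le_right M B
  simp only at this
  linarith

lemma not_unbBelow {U L : Set Ann} (d : Disjoint U L) {M : ℝ} (h : ∀ z : Ann, z.2 < M → z ∈ L) :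
    ¬ UnbBelow U := by
  intro hU
  apply hU
  refine ⟨M, ?_⟩
  rintro _ ⟨z, hz, rfl⟩
  by_contra hlt
  exact Set.disjoint_left.1 d hz (h z (not_le.1 hlt))

lemma not_unbAbove {U L : Set Ann} (d : Disjoint U L) {M : ℝ} (h : ∀ z : Ann, M < z.2 → z ∈ U) :
    ¬ UnbAbove L := by
  intro hU
  apply hU
  refine ⟨M, ?_⟩
  rintro _ ⟨z, hz, rfl⟩
  by_contra hlt
  exact Set.disjoint_left.1 d (h z (not_le.1 hlt)) hz

lemma upperComp_eq {S U L : Set Ann} (h : (closure S)ᶜ = U ∪ L) (oU : IsOpen U) (oL : IsOpen L)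
    (d : Disjoint U L) (cU : IsPreconnected U) (cL : IsPreconnected L)
    (hU : UnbAbove U) (hL : ¬ UnbAbove L) : upperComp S = U := by
  ext z
  simp only [upperComp, Set.mem_ofPred_eq, h]
  constructor
  · rintro ⟨hz | hz, hu⟩
    · exact hz
    · rw [comp_right oU oL d cL hz] at hu
      exact absurd hu hL
  · intro hz
    refine ⟨Or.inl hz, ?_⟩
    rwa [comp_left oU oL d cU hz]

lemma lowerComp_eq {S U L : Set Ann} (h : (closure S)ᶜ = U ∪ L) (oU : IsOpen U) (oL : IsOpen L)
    (d : Disjoint U L) (cU : IsPreconnected U) (cL : IsPreconnected L)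
    (hL : UnbBelow L) (hU : ¬ UnbBelow U) : lowerComp S = L := by
  ext z
  simp only [lowerComp, Set.mem_ofPred_eq, h]
  constructor
  · rintro ⟨hz | hz, hu⟩
    · rw [comp_left oU oL d cU hz] at hu
      exact absurd hu hU
    · exact hz
  · intro hz
    refine ⟨Or.inr hz, ?_⟩
    rwa [comp_right oU oL d cL hz]

lemma upperComp_eq' {S U : Set Ann} (h : (closure S)ᶜ = U) (oU : IsOpen U)
    (cU : IsPreconnected U) (hU : UnbAbove U) : upperComp S = U :=
  upperComp_eq (L := ∅) (by simpa using h) oU isOpen_empty (by simp) cU isPreconnected_empty hU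
    (by simp [UnbAbove])

lemma lowerComp_eq' {S L : Set Ann} (h : (closure S)ᶜ = L) (oL : IsOpen L)
    (cL : IsPreconnected L) (hL : UnbBelow L) : lowerComp S = L :=
  lowerComp_eq (U := ∅) (by simpa using h) isOpen_empty oL (by simp) isPreconnected_empty cL hL
    (by simp [UnbBelow])

lemma good_of_annular {E : Set Ann} (hE : IsAnnularContinuum E) : ∃ U L, Good E U L := by
  obtain ⟨hc, hcon, hunb, x, y, hx, hy, hne, hall⟩ := hE
  have hcs := hc.image continuous_snd
  obtain ⟨M, hM⟩ := hcs.bddAbove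
  obtain ⟨m, hm⟩ := hcs.bddBelow
  have oE : IsOpen Eᶜ := hc.isClosed.isOpen_compl
  have topE : ((Set.univ : Set (AddCircle (1 : ℝ))) ×ˢ Set.Ioi M) ⊆ Eᶜ := by
    rintro z ⟨-, hz⟩ hzE
    exact absurd (hM ⟨z, hzE, rfl⟩) (not_le.2 hz)
  have botE : ((Set.univ : Set (AddCircle (1 : ℝ))) ×ˢ Set.Iio m) ⊆ Eᶜ := by
    rintro z ⟨-, hz⟩ hzE
    exact absurd (hm ⟨z, hzE, rfl⟩) (not_le.2 hz)
  have pt : ((0 : AddCircle (1 : ℝ)), M + 1) ∈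
      ((Set.univ : Set (AddCircle (1 : ℝ))) ×ˢ Set.Ioi M) := by simp
  have pb : ((0 : AddCircle (1 : ℝ)), m - 1) ∈
      ((Set.univ : Set (AddCircle (1 : ℝ))) ×ˢ Set.Iio m) := by simp
  have hT := (isPreconnected_univ.prod isPreconnected_Ioi).subset_connectedComponentIn pt topE
  have hB := (isPreconnected_univ.prod isPreconnected_Iio).subset_connectedComponentIn pb botE
  set U := connectedComponentIn Eᶜ ((0 : AddCircle (1 : ℝ)), M + 1) with hU
  set L := connectedComponentIn Eᶜ ((0 : AddCircle (1 : ℝ)), m - 1) with hL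
  have key : ∀ z ∈ Eᶜ, connectedComponentIn Eᶜ z = U ∨ connectedComponentIn Eᶜ z = L := by
    intro z hz
    by_contra hcon
    push Not at hcon
    apply hunb z hz
    constructor
    · refine ⟨M, ?_⟩
      rintro _ ⟨w, hw, rfl⟩
      by_contra hlt
      apply hcon.1
      rw [connectedComponentIn_eq hw]
      exact (connectedComponentIn_eq (hT ⟨trivial, not_le.1 hlt⟩)).symm
    · refine ⟨m, ?_⟩
      rintro _ ⟨w, hw, rfl⟩
      by_contra hlt
      apply hcon.2
      rw [connectedComponentIn_eq hw]
      exact (connectedComponentIn_eq (hB ⟨trivial, not_le.1 hlt⟩)).symm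
  have hUL : U ≠ L := by
    intro h
    apply hne
    rcases key x hx with h1 | h1 <;> rcases key y hy with h2 | h2 <;> rw [h1, h2] <;>
      first | exact h | exact h.symm
  refine ⟨U, L, oE.connectedComponentIn, oE.connectedComponentIn, ?_, ?_,
    isPreconnected_connectedComponentIn, isPreconnected_connectedComponentIn,
    ⟨M, fun z hz => hT ⟨trivial, hz⟩⟩, ⟨m, fun z hz => hB ⟨trivial, hz⟩⟩⟩
  · rw [Set.disjoint_left]
    intro w h1 h2
    exact hUL ((connectedComponentIn_eq h1).trans (connectedComponentIn_eq h2).symm)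
  · apply Set.Subset.antisymm
    · intro z hz
      have := mem_connectedComponentIn hz
      rcases key z hz with h | h <;> rw [h] at this
      · exact Or.inl this
      · exact Or.inr this
    · exact Set.union_subset (connectedComponentIn_subset _ _) (connectedComponentIn_subset _ _)

lemma annular_of_good {E U L : Set Ann} (hc : IsCompact E) (hcon : IsConnected E)
    (h : Good E U L) : IsAnnularContinuum E := by
  obtain ⟨oU, oL, d, un, cU, cL, ⟨M, hM⟩, ⟨m, hm⟩⟩ := h
  have pU : ((0 : AddCircle (1 : ℝ)), M + 1) ∈ U := hM _ (by simp)
  have pL : ((0 : AddCircle (1 : ℝ)), m - 1) ∈ L := hm _ (by simp)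
  refine ⟨hc, hcon, ?_, ((0 : AddCircle (1 : ℝ)), M + 1), ((0 : AddCircle (1 : ℝ)), m - 1), ?_⟩
  · rw [un]
    rintro z (hz | hz)
    · rw [comp_left oU oL d cU hz]
      exact fun hb => unbAbove_of_s12 hM hb.1
    · rw [comp_right oU oL d cL hz]
      exact fun hb => unbBelow_of_s12 hm hb.2
  · rw [un, comp_left oU oL d cU pU, comp_right oU oL d cL pL]
    refine ⟨Or.inl pU, Or.inr pL, ?_, ?_⟩
    · intro h
      exact Set.disjoint_left.1 d pU (h ▸ pU)
    · rintro z (hz | hz)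
      · exact Or.inl (comp_left oU oL d cU hz)
      · exact Or.inr (comp_right oU oL d cL hz)

lemma core_s12 {A U L E : Set Ann} (hA : Good A U L) (hE : IsAnnularContinuum E) (hEA : E ⊆ A) :
    closure U ∩ closure L ⊆ E := by
  obtain ⟨U', L', h⟩ := good_of_annular hE
  have hsub : U ∪ L ⊆ U' ∪ L' := by
    rw [← hA.un, ← h.un]; exact Set.compl_subset_compl.2 hEA
  obtain ⟨M, hM⟩ := hA.top
  obtain ⟨M', hM'⟩ := h.top
  obtain ⟨m, hm⟩ := hA.bot
  obtain ⟨m', hm'⟩ := h.bot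
  have hU : U ⊆ U' := by
    refine hA.cU.subset_left_of_subset_union h.oU h.oL h.disj
      (Set.subset_union_left.trans hsub) ⟨((0 : AddCircle (1 : ℝ)), max M M' + 1), hM _ ?_, hM' _ ?_⟩
    · have := le_max_left M M'; simp only; linarith
    · have := le_max_right M M'; simp only; linarith
  have hL : L ⊆ L' := by
    refine hA.cL.subset_right_of_subset_union h.oU h.oL h.disj
      (Set.subset_union_right.trans hsub) ⟨((0 : AddCircle (1 : ℝ)), min m m' - 1), hm _ ?_, hm' _ ?_⟩
    · have := min_le_left m m'; simp only; linarith
    · have := min_le_right m m'; simp only; linarith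
  rintro z ⟨hzU, hzL⟩
  by_contra hz
  have : z ∈ U' ∪ L' := by rw [← h.un]; exact hz
  rcases this with h1 | h1
  · obtain ⟨w, hw1, hw2⟩ := mem_closure_iff.1 hzL U' h.oU h1
    exact Set.disjoint_left.1 h.disj hw1 (hL hw2)
  · obtain ⟨w, hw1, hw2⟩ := mem_closure_iff.1 hzU L' h.oL h1
    exact Set.disjoint_left.1 h.disj (hU hw2) hw1

/-- **Lemma 3.4.**  If `A` is an annular continuum with empty interior, then
`𝒞⁻(A) = 𝒞⁺(A) = ∂𝒰(A) ∩ ∂ℒ(A)`, and this set is the only circloid contained in `A`. -/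
theorem statement12 (A : Set Ann) (hA : IsAnnularContinuum A) (hint : interior A = ∅) :
    Cminus A = frontier (upperComp A) ∩ frontier (lowerComp A) ∧
    Cplus A = frontier (upperComp A) ∩ frontier (lowerComp A) ∧
    IsCircloidA (frontier (upperComp A) ∩ frontier (lowerComp A)) ∧
    frontier (upperComp A) ∩ frontier (lowerComp A) ⊆ A ∧
    ∀ C ⊆ A, IsCircloidA C →
      C = frontier (upperComp A) ∩ frontier (lowerComp A) := by
  obtain ⟨U, L, g⟩ := good_of_annular hA
  have g' := g
  obtain ⟨oU, oL, d, un, cU, cL, ⟨M, hM⟩, ⟨m, hm⟩⟩ := g'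
  have clA : closure A = A := hA.1.isClosed.closure_eq
  have eU : upperComp A = U := upperComp_eq (by rw [clA, un]) oU oL d cU cL (unbAbove_of_s12 hM)
    (not_unbAbove d hM)
  have eL : lowerComp A = L := lowerComp_eq (by rw [clA, un]) oU oL d cU cL (unbBelow_of_s12 hm)
    (not_unbBelow d hm)
  have hcov : closure U ∪ closure L = Set.univ := by
    rw [← closure_union, ← un, closure_compl, hint, Set.compl_empty]
  have dUL : Disjoint (closure U) L := d.closure_left oL
  have dLU : Disjoint U (closure L) := d.closure_right oU
  have hF : frontier U ∩ frontier L = closure U ∩ closure L := by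
    rw [oU.frontier_eq, oL.frontier_eq]
    ext z
    constructor
    · rintro ⟨h1, h2⟩; exact ⟨h1.1, h2.1⟩
    · rintro ⟨h1, h2⟩
      exact ⟨⟨h1, fun h => Set.disjoint_left.1 dLU h h2⟩,
        ⟨h2, fun h => Set.disjoint_left.1 dUL h1 h⟩⟩
  -- the enlarged components
  have L1 : L ⊆ (closure U)ᶜ := fun z hz h => Set.disjoint_left.1 dUL h hz
  have U1 : U ⊆ (closure L)ᶜ := fun z hz h => Set.disjoint_left.1 dLU hz h
  have L2 : (closure U)ᶜ ⊆ closure L := fun z hz =>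
    (show z ∈ closure U ∪ closure L by rw [hcov]; trivial).resolve_left hz
  have U2 : (closure L)ᶜ ⊆ closure U := fun z hz =>
    (show z ∈ closure U ∪ closure L by rw [hcov]; trivial).resolve_right hz
  have cL' : IsPreconnected (closure U)ᶜ := cL.subset_closure L1 L2
  have cU' : IsPreconnected (closure L)ᶜ := cU.subset_closure U1 U2
  have oL' : IsOpen (closure U)ᶜ := isClosed_closure.isOpen_compl
  have oU' : IsOpen (closure L)ᶜ := isClosed_closure.isOpen_compl
  have uU' : UnbAbove (closure L)ᶜ := unbAbove_of_s12 fun z hz => U1 (hM z hz)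
  have uL' : UnbBelow (closure U)ᶜ := unbBelow_of_s12 fun z hz => L1 (hm z hz)
  have clL : closure (closure U)ᶜ = closure L :=
    (closure_minimal L2 isClosed_closure).antisymm (closure_mono L1)
  have clU : closure (closure L)ᶜ = closure U :=
    (closure_minimal U2 isClosed_closure).antisymm (closure_mono U1)
  have a1 : upperComp L = (closure L)ᶜ := upperComp_eq' rfl oU' cU' uU'
  have a2 : lowerComp U = (closure U)ᶜ := lowerComp_eq' rfl oL' cL' uL'
  have a3 : lowerComp (closure L)ᶜ = (closure U)ᶜ := lowerComp_eq' (by rw [clU]) oL' cL' uL'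
  have a4 : upperComp (closure U)ᶜ = (closure L)ᶜ := upperComp_eq' (by rw [clL]) oU' cU' uU'
  have gF : Good (closure U ∩ closure L) (closure L)ᶜ (closure U)ᶜ := by
    refine ⟨oU', oL', ?_, ?_, cU', cL', ⟨M, fun z hz => U1 (hM z hz)⟩, ⟨m, fun z hz => L1 (hm z hz)⟩⟩
    · rw [Set.disjoint_left]
      intro z h1 h2
      exact h1 (L2 h2)
    · rw [Set.compl_inter, Set.union_comm]
  have FA : closure U ∩ closure L ⊆ A := core_s12 g hA subset_rfl
  have Fcl : IsClosed (closure U ∩ closure L) := isClosed_closure.inter isClosed_closure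
  have Fc : IsCompact (closure U ∩ closure L) := hA.1.of_isClosed_subset Fcl FA
  have Fpre : IsPreconnected (closure U ∩ closure L) := by
    refine unicoh_s12 _ _ isClosed_closure isClosed_closure cU.closure cL.closure hcov (M + 1) ?_
    intro x hx
    exact U1 (hM (x, M + 1) (by simp)) hx
  have Fne : (closure U ∩ closure L).Nonempty := by
    have := isPreconnected_closed_iff.1 (isPreconnected_univ (α := Ann)) (closure U) (closure L)
      isClosed_closure isClosed_closure hcov.ge
      ⟨((0 : AddCircle (1 : ℝ)), M + 1), trivial, subset_closure (hM _ (by simp))⟩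
      ⟨((0 : AddCircle (1 : ℝ)), m - 1), trivial, subset_closure (hm _ (by simp))⟩
    simpa using this
  have Fan : IsAnnularContinuum (closure U ∩ closure L) := annular_of_good Fc ⟨Fne, Fpre⟩ gF
  rw [Cminus, Cplus, eU, eL, hF, a1, a2, a3, a4]
  refine ⟨?_, ?_, ⟨Fan, ?_⟩, FA, ?_⟩
  · rw [Set.compl_union, compl_compl, compl_compl, Set.inter_comm]
  · rw [Set.compl_union, compl_compl, compl_compl]
  · intro E hE hEa
    exact hE.antisymm (core_s12 g hEa (hE.trans FA))
  · intro C hC hCc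
    exact (hCc.2 _ (core_s12 g hCc.1 hC) Fan).symm
end
end

section
/- Let f be a non-wandering homeomorphism of the open annulus 𝔸 = 𝕋¹ × ℝ homotopic to the identity, and suppose f has no periodic points. Then every nonempty open f-invariant set V ⊆ 𝔸 contains an essential simple closed curve. -/
open Filter Topology

local notation "⟪" x ", " y "⟫" => @inner ℝ _ _ x y

noncomputable section

/-- `f` is non-wandering: no nonempty open set `U` satisfies `fⁿ(U) ∩ U = ∅` for all
`n ≥ 1`. -/
def NonWandering {X : Type*} [TopologicalSpace X] (f : X → X) : Prop :=
  ∀ U : Set X, IsOpen U → U.Nonempty → ∃ n : ℕ, 1 ≤ n ∧ (f^[n] '' U ∩ U).Nonempty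

/-- `f` has a periodic point. -/
def HasPeriodicPoint {X : Type*} (f : X → X) : Prop :=
  ∃ (x : X) (q : ℕ), 1 ≤ q ∧ f^[q] x = x

/-- The covering map `p : ℝ² → 𝔸`. -/
def projA (z : ℝ × ℝ) : Ann := ((z.1 : AddCircle (1 : ℝ)), z.2)

/-- `G` is a lift of `f : 𝔸 → 𝔸`:  `p ∘ G = f ∘ p` and `G (z + (1,0)) = G z + (1,0)`.
The existence of such a lift expresses that `f` is homotopic to the identity. -/
def IsLiftA (f : Ann ≃ₜ Ann) (G : (ℝ × ℝ) ≃ₜ (ℝ × ℝ)) : Prop :=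
  (∀ z : ℝ × ℝ, projA (G z) = f (projA z)) ∧
  ∀ z : ℝ × ℝ, G (z + (1, 0)) = G z + (1, 0)

/-- A simple closed curve in `𝔸`: a subset homeomorphic to the circle. -/
def IsSimpleClosedCurveA (Γ : Set Ann) : Prop :=
  ∃ e : AddCircle (1 : ℝ) → Ann, IsEmbedding e ∧ Γ = Set.range e


lemma exists_clog {E : Type*} [NormedAddCommGroup E] [NormedSpace ℝ E] {U : Set E}
    (hU : Convex ℝ U) (hne : U.Nonempty) (ho : IsOpen U) {g : E → ℂ} (hg : ContinuousOn g U)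
    (h0 : ∀ x ∈ U, g x ≠ 0) : ∃ l : E → ℂ, ContinuousOn l U ∧ ∀ x ∈ U, Complex.exp (l x) = g x := by
  have : ContractibleSpace U := hU.contractibleSpace hne
  have hs : IsSimplyConnected U := by unfold IsSimplyConnected; infer_instance
  obtain ⟨l, hl, h⟩ := Complex.exists_continuousOn_eqOn_exp_comp hs ho hg (by
    rintro ⟨x, hx, hx0⟩; exact h0 x hx hx0)
  exact ⟨l, hl, fun x hx => h hx⟩

lemma clog_const {X : Type*} [TopologicalSpace X] {S : Set X} (hS : IsPreconnected S)
    {u : X → ℂ} (hu : ContinuousOn u S) (h1 : ∀ x ∈ S, Complex.exp (u x) = 1) {x y : X}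
    (hx : x ∈ S) (hy : y ∈ S) : u x = u y := by
  have hn : ∀ x, ∃ n : ℤ, x ∈ S → u x = n * (2 * Real.pi * Complex.I) := by
    intro x
    by_cases hx : x ∈ S
    · obtain ⟨n, hn⟩ := Complex.exp_eq_one_iff.1 (h1 x hx)
      exact ⟨n, fun _ => hn⟩
    · exact ⟨0, fun h => absurd h hx⟩
  choose n hn using hn
  have hc : ContinuousOn n S := by
    rw [Int.isClosedEmbedding_coe_real.isInducing.continuousOn_iff]
    have : ContinuousOn (fun x => (u x).im / (2 * Real.pi)) S :=
      (Complex.continuous_im.comp_continuousOn hu).div_const _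
    refine this.congr ?_
    intro x hx
    have : (u x).im = n x * (2 * Real.pi) := by rw [hn x hx]; simp
    simp only [Function.comp, this]
    field_simp
  have := hS.constant hc hx hy
  rw [hn x hx, hn y hy, this]

lemma precon_offdiag : IsPreconnected {p : ℂ × ℂ | p.1 ≠ p.2} := by
  have h : IsPreconnected ({0}ᶜ : Set ℂ) :=
    (isConnected_compl_singleton_of_one_lt_rank (by simp) 0).isPreconnected
  have h2 := (isPreconnected_univ (α := ℂ)).prod h
  have h3 := h2.image (fun p : ℂ × ℂ => (p.1 + p.2, p.1)) (by fun_prop)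
  convert h3
  ext ⟨z, w⟩
  simp only [Set.mem_ofPred_eq, Set.mem_image, Set.mem_prod, Set.mem_univ, true_and,
    Set.mem_compl_iff, Set.mem_singleton_iff, Prod.exists, Prod.mk.injEq]
  constructor
  · intro h; exact ⟨w, z - w, sub_ne_zero.2 h, by ring, rfl⟩
  · rintro ⟨a, b, hb, rfl, rfl⟩; simpa using hb

/-- `L` is a continuous logarithm of `(h z - h w) / (z - w)`. -/
def IsOL (h : ℂ → ℂ) (L : ℂ × ℂ → ℂ) : Prop :=
  ContinuousOn L {p : ℂ × ℂ | p.1 ≠ p.2} ∧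
  ∀ z w, z ≠ w → Complex.exp (L (z, w)) * (z - w) = h z - h w

lemma IsOL.symm {h : ℂ → ℂ} {L : ℂ × ℂ → ℂ} (hL : IsOL h L) {z w : ℂ} (hzw : z ≠ w) :
    L (z, w) = L (w, z) := by
  have hc : ContinuousOn (fun p : ℂ × ℂ => L p - L p.swap) {p : ℂ × ℂ | p.1 ≠ p.2} :=
    hL.1.sub (hL.1.comp continuous_swap.continuousOn (fun p hp => Ne.symm hp))
  have h1 : ∀ p ∈ {p : ℂ × ℂ | p.1 ≠ p.2}, Complex.exp (L p - L p.swap) = 1 := by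
    rintro ⟨a, b⟩ (hab : a ≠ b)
    have e1 := hL.2 a b hab
    have e2 := hL.2 b a hab.symm
    have : (a - b) ≠ 0 := sub_ne_zero.2 hab
    rw [Complex.exp_sub, div_eq_one_iff_eq (Complex.exp_ne_zero _)]
    apply mul_right_cancel₀ this
    simp only [Prod.swap]
    linear_combination e1 + e2
  have := clog_const precon_offdiag hc h1 (x := (z, w)) (y := (w, z)) hzw (Ne.symm hzw)
  simp only [Prod.swap] at this
  linear_combination this / 2

theorem brouwer_core {h : ℂ → ℂ} (hc : Continuous h) (hfix : ∀ z, h z ≠ z)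
    {L : ℂ × ℂ → ℂ} (hL : IsOL h L) {γ : ℝ → ℂ} (hγ : Continuous γ)
    (hs : ∀ t, γ (t + 1) = h (γ t)) {a τ : ℝ} (hτ : 1 < τ) (hab : γ a = γ (a + τ))
    (hinj : ∀ s t, 0 < t - s → t - s < τ → γ s ≠ γ t) : False := by
  obtain ⟨M, hMc, hM⟩ := exists_clog (convex_univ (E := ℂ)) Set.univ_nonempty isOpen_univ
    (g := fun z => h z - z) (by fun_prop) (fun z _ => sub_ne_zero.2 (hfix z))
  have hMc' : Continuous M := continuousOn_univ.1 hMc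
  set Ω : Set (ℝ × ℝ) := {p | 0 < p.2 - p.1 ∧ p.2 - p.1 < τ} with hΩ
  have hΩo : IsOpen Ω := by
    have h1 : IsOpen {p : ℝ × ℝ | 0 < p.2 - p.1} := isOpen_lt (by fun_prop) (by fun_prop)
    have h2 : IsOpen {p : ℝ × ℝ | p.2 - p.1 < τ} := isOpen_lt (by fun_prop) (by fun_prop)
    exact h1.inter h2
  have hΩc : Convex ℝ Ω := by
    rintro ⟨s, t⟩ ⟨h1, h2⟩ ⟨s', t'⟩ ⟨h3, h4⟩ p q hp hq hpq
    simp only at h1 h2 h3 h4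
    have hq' : q = 1 - p := by linarith
    subst hq'
    simp only [hΩ, Set.mem_ofPred_eq, Prod.smul_mk, Prod.mk_add_mk, smul_eq_mul]
    constructor <;> rcases hp.eq_or_lt with rfl | hp' <;> nlinarith
  have hΩn : Ω.Nonempty := ⟨(0, 1), by simp [hΩ, hτ]⟩
  obtain ⟨Λ, hΛc, hΛ⟩ := exists_clog hΩc hΩn hΩo (g := fun p => γ p.2 - γ p.1)
    (by fun_prop) (fun p hp => sub_ne_zero.2 (hinj _ _ hp.1 hp.2).symm)
  -- translation relation
  have key : ∀ p ∈ Ω, ∀ q ∈ Ω, Λ (p.1 + 1, p.2 + 1) - Λ p - L (γ p.2, γ p.1)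
      = Λ (q.1 + 1, q.2 + 1) - Λ q - L (γ q.2, γ q.1) := by
    intro p hp q hq
    refine clog_const hΩc.isPreconnected (u := fun p => Λ (p.1 + 1, p.2 + 1) - Λ p - L (γ p.2, γ p.1)) ?_ ?_ hp hq
    · refine ((hΛc.comp (t := Ω) (s := Ω) (f := fun p : ℝ × ℝ => (p.1 + 1, p.2 + 1)) (by fun_prop) ?_).sub hΛc).sub
        (hL.1.comp (s := Ω) (f := fun p : ℝ × ℝ => (γ p.2, γ p.1)) (by fun_prop) ?_)
      · intro p hp; simpa [hΩ] using hp
      · intro p hp; exact (hinj _ _ hp.1 hp.2).symm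
    · rintro ⟨s, t⟩ hp
      have hp1 : (s + 1, t + 1) ∈ Ω := by simpa [hΩ] using hp
      have hne : γ t ≠ γ s := (hinj _ _ hp.1 hp.2).symm
      have e := hL.2 _ _ hne
      simp only
      rw [Complex.exp_sub, Complex.exp_sub, hΛ _ hp, hΛ _ hp1]
      simp only [hs]
      rw [← e]
      have := sub_ne_zero.2 hne
      have := Complex.exp_ne_zero (L (γ t, γ s))
      field_simp
  have keyM : Λ (a, a + 1) = Λ (a + τ, a + τ + 1) := by
    have hm : ∀ t : ℝ, (t, t + 1) ∈ Ω := fun t => by simp [hΩ, hτ]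
    have := clog_const (isPreconnected_univ (α := ℝ)) (u := fun t => Λ (t, t + 1) - M (γ t)) ?_ ?_
      (Set.mem_univ a) (Set.mem_univ (a + τ))
    · simp only [← hab] at this
      linear_combination this
    · rw [continuousOn_univ]
      exact (hΛc.comp_continuous (by fun_prop) hm).sub (by fun_prop)
    · intro t _
      rw [Complex.exp_sub, hΛ _ (hm t), hM _ (Set.mem_univ _)]
      simp only [hs]
      exact div_self (sub_ne_zero.2 (hfix _))
  -- the rotation number of the simple closed curve
  set Q : ℝ → ℂ := fun δ => Λ (a + τ - δ, a + τ) - Λ (a, a + δ) + Λ (a + δ, a + τ)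
    - Λ (a, a + τ - δ) with hQ
  have m1 : ∀ δ ∈ Set.Ioo 0 τ, (a + τ - δ, a + τ) ∈ Ω := fun δ hδ => by
    simp only [hΩ, Set.mem_ofPred_eq]; constructor <;> linarith [hδ.1, hδ.2]
  have m2 : ∀ δ ∈ Set.Ioo 0 τ, (a, a + δ) ∈ Ω := fun δ hδ => by
    simp only [hΩ, Set.mem_ofPred_eq]; constructor <;> linarith [hδ.1, hδ.2]
  have m3 : ∀ δ ∈ Set.Ioo 0 τ, (a + δ, a + τ) ∈ Ω := fun δ hδ => by
    simp only [hΩ, Set.mem_ofPred_eq]; constructor <;> linarith [hδ.1, hδ.2]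
  have m4 : ∀ δ ∈ Set.Ioo 0 τ, (a, a + τ - δ) ∈ Ω := fun δ hδ => by
    simp only [hΩ, Set.mem_ofPred_eq]; constructor <;> linarith [hδ.1, hδ.2]
  have hQ1 : Q 1 = 0 := by
    have hm : (1 : ℝ) ∈ Set.Ioo 0 τ := ⟨one_pos, hτ⟩
    have e := key _ (m1 1 hm) _ (m4 1 hm)
    have e1 : a + τ - 1 + 1 = a + τ := by ring
    simp only [e1, ← hab] at e
    have hne : γ a ≠ γ (a + τ - 1) := hinj _ _ (m4 1 hm).1 (m4 1 hm).2
    rw [hL.symm hne] at e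
    simp only [hQ]
    linear_combination (-1 : ℂ) * keyM - e
  have hQc : Q 1 = Q (τ / 2) := by
    refine clog_const (isPreconnected_Ioo (a := (0:ℝ)) (b := τ)) ?_ ?_ ⟨one_pos, hτ⟩
      ⟨by linarith, by linarith⟩
    · refine (((hΛc.comp (by fun_prop) m1).sub (hΛc.comp (by fun_prop) m2)).add
        (hΛc.comp (by fun_prop) m3)).sub (hΛc.comp (by fun_prop) m4)
    · intro δ hδ
      simp only [hQ]
      rw [Complex.exp_sub, Complex.exp_add, Complex.exp_sub, hΛ _ (m1 δ hδ), hΛ _ (m2 δ hδ),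
        hΛ _ (m3 δ hδ), hΛ _ (m4 δ hδ)]
      simp only [← hab]
      have n1 := sub_ne_zero.2 (hinj _ _ (m2 δ hδ).1 (m2 δ hδ).2).symm
      have n2 := sub_ne_zero.2 (hinj _ _ (m4 δ hδ).1 (m4 δ hδ).2).symm
      simp only at n1 n2
      field_simp
      ring
  have hm : τ / 2 ∈ Set.Ioo 0 τ := ⟨by linarith, by linarith⟩
  have e2 : a + τ - τ / 2 = a + τ / 2 := by ring
  have hz : Λ (a + τ / 2, a + τ) = Λ (a, a + τ / 2) := by
    have : Q (τ / 2) = 0 := by rw [← hQc, hQ1]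
    simp only [hQ, e2] at this
    linear_combination this / 2
  have hz' := congrArg Complex.exp hz
  rw [hΛ _ (m3 _ hm), hΛ _ (m2 _ hm)] at hz'
  simp only [← hab] at hz'
  have n1 := (hinj _ _ (m2 _ hm).1 (m2 _ hm).2)
  apply n1
  simp only
  linear_combination hz' / 2

lemma exists_extend (h : ℂ ≃ₜ ℂ) (g : ℝ → ℂ) (hg : Continuous g) (h1 : g 1 = h (g 0)) :
    ∃ γ : ℝ → ℂ, Continuous γ ∧ (∀ t, γ (t + 1) = h (γ t)) ∧ ∀ t ∈ Set.Icc (0:ℝ) 1, γ t = g t := by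
  have hz : ∀ (n : ℤ) (z : ℂ), (h ^ (n + 1)) z = h ((h ^ n) z) := by
    intro n z; rw [add_comm, zpow_add, zpow_one]; rfl
  have hz' : ∀ (n : ℤ) (z : ℂ), (h ^ (n + 1)) z = (h ^ n) (h z) := by
    intro n z; rw [zpow_add, zpow_one]; rfl
  set γ : ℝ → ℂ := fun t => (h ^ ⌊t⌋) (g (Int.fract t)) with hγ
  have hI : ∀ (n : ℤ), ∀ t ∈ Set.Icc (n : ℝ) (n + 1), γ t = (h ^ n) (g (t - n)) := by
    rintro n t ⟨ht1, ht2⟩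
    rcases ht2.eq_or_lt with rfl | ht2
    · have : ⌊(n : ℝ) + 1⌋ = n + 1 := by simp
      simp only [hγ, this, Int.fract]
      rw [hz']
      push_cast
      simp [h1]
    · have : ⌊t⌋ = n := Int.floor_eq_iff.2 ⟨ht1, ht2⟩
      simp only [hγ, Int.fract, this]
  have hIc : ∀ n : ℤ, ContinuousOn γ (Set.Icc (n : ℝ) (n + 1)) := by
    intro n
    refine ContinuousOn.congr (f := fun t => (h ^ n) (g (t - n))) ?_ (hI n)
    have := (h ^ n).continuous
    fun_prop
  refine ⟨γ, ?_, ?_, ?_⟩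
  · rw [continuous_iff_continuousAt]
    intro t
    have hu := (hIc (⌊t⌋ - 1)).union_of_isClosed (hIc ⌊t⌋) isClosed_Icc isClosed_Icc
    refine hu.continuousAt ?_
    refine mem_of_superset (Ioo_mem_nhds (a := (⌊t⌋ : ℝ) - 1) (b := ⌊t⌋ + 1) ?_ ?_) ?_
    · linarith [Int.floor_le t]
    · exact Int.lt_floor_add_one t
    · rintro s ⟨hs1, hs2⟩
      rcases le_total s ⌊t⌋ with h | h
      · left; push_cast; exact ⟨hs1.le, by linarith⟩
      · right; exact ⟨h, hs2.le⟩
  · intro t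
    simp only [hγ, Int.floor_add_one, Int.fract_add_one, hz]
  · intro t ht
    have := hI 0 t (by simpa using ht)
    simpa using this

lemma shift_zpow {h : ℂ ≃ₜ ℂ} {γ : ℝ → ℂ} (hs : ∀ t, γ (t + 1) = h (γ t)) (n : ℤ) {s t : ℝ}
    (hst : γ s = γ t) : γ (s + n) = γ (t + n) := by
  induction n with
  | zero => simpa using hst
  | succ k ih => push_cast at ih ⊢; rw [← add_assoc, ← add_assoc, hs, hs, ih]
  | pred k ih =>
    push_cast at ih ⊢
    apply h.injective
    rw [← hs, ← hs]
    convert ih using 2 <;> ring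

lemma exists_transl_arc (h : ℂ ≃ₜ ℂ) (hfix : ∀ z, h z ≠ z) (x : ℂ) :
    ∃ γ : ℝ → ℂ, Continuous γ ∧ (∀ t, γ (t + 1) = h (γ t)) ∧ γ (1/2) = x ∧
      ∀ s t, 0 < t - s → t - s ≤ 1 → γ s ≠ γ t := by
  obtain ⟨w, hw⟩ := Continuous.exists_forall_le (f := fun p => max ‖p - x‖ ‖h p - x‖)
    (by have := h.continuous; fun_prop) (by
      refine tendsto_atTop_mono (fun p => le_max_left _ _) ?_
      have := tendsto_norm_cocompact_atTop.comp
        ((Homeomorph.subRight x).isClosedEmbedding.tendsto_cocompact)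
      exact this)
  set r := max ‖w - x‖ ‖h w - x‖ with hr
  have hr0 : 0 < r := by
    rcases (le_trans (norm_nonneg _) (le_max_left ‖w - x‖ ‖h w - x‖)).eq_or_lt with h0 | h0
    · exfalso
      have e1 : ‖w - x‖ ≤ 0 := by rw [h0]; exact le_max_left _ _
      have e2 : ‖h w - x‖ ≤ 0 := by rw [h0]; exact le_max_right _ _
      have e1 := sub_eq_zero.1 (norm_le_zero_iff.1 e1)
      have e2 := sub_eq_zero.1 (norm_le_zero_iff.1 e2)
      exact hfix w (by rw [e2, e1])
    · exact h0
  have hlow : ∀ p, ‖p - x‖ < r → ‖h p - x‖ < r → False := by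
    intro p h1 h2
    exact absurd (hw p) (not_le.2 (max_lt h1 h2))
  have hA : ∀ v : ℂ, ‖v - x‖ = r → ∀ k : ℂ → ℂ, Continuous k → ‖k v - x‖ < r →
      ∃ p, ‖p - x‖ < r ∧ ‖k p - x‖ < r := by
    intro v hv k hk hkv
    have hcont : Continuous (fun ε : ℝ => ‖k (x + (1 - ε : ℝ) * (v - x)) - x‖) := by fun_prop
    have h0 : ∀ᶠ ε in 𝓝 (0:ℝ), ‖k (x + (1 - ε : ℝ) * (v - x)) - x‖ < r :=
      hcont.continuousAt.eventually_lt continuousAt_const (by simpa using hkv)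
    have h1 : ∀ᶠ ε in 𝓝[>] (0:ℝ), ε ∈ Set.Ioo (0:ℝ) 1 := Ioo_mem_nhdsGT one_pos
    obtain ⟨ε, h2, h3⟩ := ((h0.filter_mono nhdsWithin_le_nhds).and h1).exists
    refine ⟨_, ?_, h2⟩
    rw [add_sub_cancel_left, norm_mul, hv, Complex.norm_real, Real.norm_eq_abs,
      abs_of_pos (by linarith [h3.2])]
    nlinarith [h3.1]
  have hwle : ‖w - x‖ ≤ r := le_max_left _ _
  have hyle : ‖h w - x‖ ≤ r := le_max_right _ _
  have hyr : ‖h w - x‖ = r := by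
    by_contra hne
    have hlt := lt_of_le_of_ne hyle hne
    have hwr : ‖w - x‖ = r := by
      rcases max_choice ‖w - x‖ ‖h w - x‖ with e | e
      · exact e.symm
      · exact absurd e.symm hne
    obtain ⟨p, h1, h2⟩ := hA w hwr h h.continuous hlt
    exact hlow p h1 h2
  have hwr : ‖w - x‖ = r := by
    by_contra hne
    have hlt := lt_of_le_of_ne hwle hne
    obtain ⟨p, h1, h2⟩ := hA (h w) hyr h.symm h.symm.continuous (by simpa using hlt)
    exact hlow (h.symm p) h2 (by simpa using h1)
  set g : ℝ → ℂ := fun t => x + (max (1 - 2 * t) 0 : ℝ) * (w - x) + (max (2 * t - 1) 0 : ℝ) * (h w - x) with hg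
  have g1 : ∀ t ≤ 1/2, g t = x + (1 - 2 * t : ℝ) * (w - x) := by
    intro t ht
    simp only [hg]
    rw [max_eq_left (by linarith), max_eq_right (by linarith)]; simp
  have g2 : ∀ t ≥ 1/2, g t = x + (2 * t - 1 : ℝ) * (h w - x) := by
    intro t ht
    simp only [hg]
    rw [max_eq_right (by linarith), max_eq_left (by linarith)]; simp
  have gn : ∀ t, ‖g t - x‖ = |1 - 2 * t| * r := by
    intro t
    rcases le_total t (1/2) with ht | ht
    · rw [g1 t ht, add_sub_cancel_left, norm_mul, Complex.norm_real, hwr, Real.norm_eq_abs]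
    · rw [g2 t ht, add_sub_cancel_left, norm_mul, Complex.norm_real, hyr, Real.norm_eq_abs, abs_sub_comm]
  obtain ⟨γ, hγc, hγs, hγ⟩ := exists_extend h g (by fun_prop) (by
    rw [g1 0 (by norm_num), g2 1 (by norm_num)]
    norm_num)
  refine ⟨γ, hγc, hγs, ?_, ?_⟩
  · rw [hγ _ (by norm_num), g1 _ le_rfl]; norm_num
  have main : ∀ s t, 0 ≤ s → s < 1 → 0 < t - s → t - s ≤ 1 → γ s ≠ γ t := by
    intro s t hs0 hs1 h0 h1 he
    rcases le_or_gt t 1 with ht | ht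
    · rw [hγ s ⟨hs0, hs1.le⟩, hγ t ⟨by linarith, ht⟩] at he
      have hn : |1 - 2 * s| * r = |1 - 2 * t| * r := by rw [← gn, ← gn, he]
      have hn := mul_right_cancel₀ hr0.ne' hn
      rcases abs_eq_abs.1 hn with e | e
      · linarith
      · have hs2 : s < 1/2 := by linarith
        have ht2 : t ≥ 1/2 := by linarith
        rw [g1 s hs2.le, g2 t ht2] at he
        have e' : 2 * t - 1 = 1 - 2 * s := by linarith
        rw [e'] at he
        have hne : ((1 - 2 * s : ℝ) : ℂ) ≠ 0 := by
          exact_mod_cast (by linarith : (1 - 2 * s) ≠ 0)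
        have := mul_left_cancel₀ hne (add_left_cancel he)
        exact hfix w (sub_left_injective this).symm
    · have ht' : γ t = h (γ (t - 1)) := by rw [← hγs]; congr 1; ring
      refine hlow (γ (t - 1)) ?_ ?_
      · rw [hγ _ ⟨by linarith, by linarith⟩, gn]
        have : |1 - 2 * (t - 1)| < 1 := by rw [abs_lt]; constructor <;> linarith
        nlinarith
      · rw [← ht', ← he, hγ _ ⟨by linarith, by linarith⟩, gn]
        have : |1 - 2 * s| < 1 := by rw [abs_lt]; constructor <;> linarith
        nlinarith
  intro s t h0 h1 he
  have := shift_zpow hγs (-⌊s⌋) he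
  refine main _ _ ?_ ?_ ?_ ?_ this
  · push_cast; linarith [Int.floor_le s]
  · push_cast; linarith [Int.lt_floor_add_one s]
  · linarith
  · linarith

theorem brouwer_periodic (h : ℂ ≃ₜ ℂ) (hfix : ∀ z, h z ≠ z) {L : ℂ × ℂ → ℂ} (hL : IsOL h L)
    (x : ℂ) (n : ℕ) (hn : 1 ≤ n) (hx : h^[n] x = x) : False := by
  obtain ⟨γ, hγc, hγs, hγx, hinj⟩ := exists_transl_arc h hfix x
  have hit : ∀ (k : ℕ) t, γ (t + k) = h^[k] (γ t) := by
    intro k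
    induction k with
    | zero => simp
    | succ k ih => intro t; rw [Function.iterate_succ_apply', ← ih, ← hγs]; push_cast; ring_nf
  have hn' : (1 : ℝ) ≤ n := by exact_mod_cast hn
  set K : Set (ℝ × ℝ) := {p | 0 ≤ p.1 ∧ p.1 ≤ 1 ∧ 1 ≤ p.2 - p.1 ∧ p.2 - p.1 ≤ n ∧ γ p.1 = γ p.2} with hK
  have hKc : IsCompact K := by
    refine (isCompact_Icc (a := ((0, 0) : ℝ × ℝ)) (b := (1, n + 1))).of_isClosed_subset ?_ ?_
    · have c1 : IsClosed {p : ℝ × ℝ | 0 ≤ p.1} := isClosed_le (by fun_prop) (by fun_prop)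
      have c2 : IsClosed {p : ℝ × ℝ | p.1 ≤ 1} := isClosed_le (by fun_prop) (by fun_prop)
      have c3 : IsClosed {p : ℝ × ℝ | 1 ≤ p.2 - p.1} := isClosed_le (by fun_prop) (by fun_prop)
      have c4 : IsClosed {p : ℝ × ℝ | p.2 - p.1 ≤ n} := isClosed_le (by fun_prop) (by fun_prop)
      have c5 : IsClosed {p : ℝ × ℝ | γ p.1 = γ p.2} := isClosed_eq (by fun_prop) (by fun_prop)
      exact c1.inter (c2.inter (c3.inter (c4.inter c5)))
    · rintro ⟨s, t⟩ ⟨h1, h2, h3, h4, -⟩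
      simp only at h1 h2 h3 h4
      exact ⟨⟨h1, by simp; linarith⟩, ⟨h2, by simp; linarith⟩⟩
  have hKn : K.Nonempty := by
    refine ⟨(1/2, 1/2 + n), by norm_num, by norm_num, ?_, ?_, ?_⟩
    · simpa using hn'
    · simp
    · rw [hit, hγx, hx]
  obtain ⟨⟨a, b⟩, hab, hmin⟩ := hKc.exists_isMinOn hKn (f := fun p : ℝ × ℝ => p.2 - p.1) (by fun_prop)
  obtain ⟨h1, h2, h3, h4, h5⟩ := hab
  simp only at h1 h2 h3 h4 h5
  have hτ : 1 < b - a := by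
    rcases h3.eq_or_lt with e | e
    · exact absurd h5 (hinj a b (by linarith) (by linarith))
    · exact e
  refine brouwer_core h.continuous hfix hL hγc hγs (a := a) hτ (by rw [h5]; congr 1; ring) ?_
  intro s t e1 e2 he
  rcases le_or_gt (t - s) 1 with e3 | e3
  · exact hinj s t e1 e3 he
  · have hs := shift_zpow hγs (-⌊s⌋) he
    have := hmin (a := (s + (-⌊s⌋ : ℤ), t + (-⌊s⌋ : ℤ))) ⟨?_, ?_, ?_, ?_, hs⟩
    · simp only [Set.mem_ofPred_eq] at this; linarith
    · push_cast; linarith [Int.floor_le s]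
    · push_cast; linarith [Int.lt_floor_add_one s]
    · push_cast; linarith
    · push_cast; linarith

lemma IsOL.comp {h k : ℂ → ℂ} {L L' : ℂ × ℂ → ℂ} (hL : IsOL h L) (hL' : IsOL k L')
    (hk : Continuous k) (hi : Function.Injective k) :
    IsOL (h ∘ k) (fun p => L (k p.1, k p.2) + L' p) := by
  constructor
  · refine (hL.1.comp (f := fun p : ℂ × ℂ => (k p.1, k p.2)) (by fun_prop) ?_).add hL'.1
    intro p hp
    exact fun e => hp (hi e)
  · intro z w hzw
    simp only [Function.comp]
    rw [Complex.exp_add, mul_assoc, hL'.2 z w hzw, hL.2 _ _ (fun e => hzw (hi e))]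

lemma IsOL.symm_homeo {h : ℂ ≃ₜ ℂ} {L : ℂ × ℂ → ℂ} (hL : IsOL h L) :
    IsOL h.symm (fun p => - L (h.symm p.1, h.symm p.2)) := by
  have hk := h.symm.continuous
  constructor
  · refine (hL.1.comp (f := fun p : ℂ × ℂ => (h.symm p.1, h.symm p.2)) (by fun_prop) ?_).neg
    intro p hp
    exact fun e => hp (h.symm.injective e)
  · intro z w hzw
    have := hL.2 (h.symm z) (h.symm w) (fun e => hzw (h.symm.injective e))
    simp only [Homeomorph.apply_symm_apply] at this
    rw [← this, ← mul_assoc, ← Complex.exp_add]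
    simp

lemma exists_push (a v : ℂ) (ρ : ℝ) (hv : ‖v‖ < ρ) :
    ∃ (φ : ℂ ≃ₜ ℂ) (L : ℂ × ℂ → ℂ), IsOL φ L ∧ φ (a + v) = a ∧ ∀ z, ρ ≤ ‖z - a‖ → φ z = z := by
  have hρ : 0 < ρ := lt_of_le_of_lt (norm_nonneg _) hv
  set c : ℂ → ℝ := fun z => max 0 (1 - ‖z - a‖ / ρ) with hc
  have hcl : ∀ z w, |c z - c w| ≤ ‖z - w‖ / ρ := by
    intro z w
    have h1 := abs_max_sub_max_le_abs (1 - ‖z - a‖ / ρ) (1 - ‖w - a‖ / ρ) 0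
    rw [max_comm _ (0:ℝ), max_comm _ (0:ℝ)] at h1
    refine h1.trans ?_
    have h2 := abs_norm_sub_norm_le (w - a) (z - a)
    have e1 : (1 - ‖z - a‖ / ρ) - (1 - ‖w - a‖ / ρ) = (‖w - a‖ - ‖z - a‖) / ρ := by ring
    rw [e1, abs_div, abs_of_pos hρ]
    have e2 : w - a - (z - a) = w - z := by ring
    rw [e2, norm_sub_rev w z] at h2
    gcongr
  set ψ : ℂ → ℂ := fun z => z + c z * v with hψ
  have hψc : Continuous ψ := by simp only [hψ, hc]; fun_prop
  have hdiff : ∀ z w, ‖(ψ z - ψ w) - (z - w)‖ ≤ ‖v‖ / ρ * ‖z - w‖ := by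
    intro z w
    have e : (ψ z - ψ w) - (z - w) = ((c z - c w : ℝ) : ℂ) * v := by simp [hψ]; ring
    rw [e, norm_mul, Complex.norm_real, Real.norm_eq_abs]
    calc |c z - c w| * ‖v‖ ≤ ‖z - w‖ / ρ * ‖v‖ := by gcongr; exact hcl z w
      _ = _ := by ring
  have hlt : ‖v‖ / ρ < 1 := (div_lt_one hρ).2 hv
  obtain ⟨κ, hκ⟩ : ∃ κ : NNReal, (κ : ℝ) = ‖v‖ / ρ := ⟨⟨‖v‖ / ρ, by positivity⟩, rfl⟩
  have happ : ApproximatesLinearOn ψ ((ContinuousLinearEquiv.refl ℝ ℂ : ℂ ≃L[ℝ] ℂ) : ℂ →L[ℝ] ℂ) Set.univ κ := by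
    intro z _ w _
    rw [hκ]
    simpa using hdiff z w
  have hN : κ <
      ‖((ContinuousLinearEquiv.refl ℝ ℂ).symm : ℂ →L[ℝ] ℂ)‖₊⁻¹ := by
    have : ‖((ContinuousLinearEquiv.refl ℝ ℂ).symm : ℂ →L[ℝ] ℂ)‖₊ = 1 := by
      have : ((ContinuousLinearEquiv.refl ℝ ℂ).symm : ℂ →L[ℝ] ℂ) = ContinuousLinearMap.id ℝ ℂ := rfl
      rw [this, ContinuousLinearMap.nnnorm_id]
    rw [this, inv_one, ← NNReal.coe_lt_coe]
    simpa [hκ] using hlt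
  set Ψ : ℂ ≃ₜ ℂ := happ.toHomeomorph ψ (Or.inr hN) with hΨ
  have hΨψ : ∀ z, Ψ z = ψ z := fun z => rfl
  have hslit : ∀ z w, z ≠ w → (ψ z - ψ w) / (z - w) ∈ Complex.slitPlane := by
    intro z w hzw
    have hne := sub_ne_zero.2 hzw
    have e : (ψ z - ψ w) / (z - w) = 1 + ((ψ z - ψ w) - (z - w)) / (z - w) := by
      field_simp; ring
    rw [e]
    apply Complex.mem_slitPlane_of_norm_lt_one
    rw [norm_div, div_lt_one (norm_pos_iff.2 hne)]
    have := hdiff z w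
    have h0 := norm_pos_iff.2 hne
    nlinarith
  have hOL : IsOL Ψ (fun p => Complex.log ((ψ p.1 - ψ p.2) / (p.1 - p.2))) := by
    constructor
    · refine ContinuousOn.clog ?_ (fun p hp => hslit _ _ hp)
      refine ContinuousOn.div (by fun_prop) (by fun_prop) (fun p hp => sub_ne_zero.2 hp)
    · intro z w hzw
      have hne := sub_ne_zero.2 hzw
      simp only [hΨψ]
      rw [Complex.exp_log (Complex.slitPlane_ne_zero (hslit z w hzw))]
      field_simp
  refine ⟨Ψ.symm, _, hOL.symm_homeo, ?_, ?_⟩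
  · rw [Homeomorph.symm_apply_eq, hΨψ]
    simp [hψ, hc]
  · intro z hz
    rw [Homeomorph.symm_apply_eq, hΨψ]
    have : c z = 0 := by
      simp only [hc]
      apply max_eq_left
      have := (one_le_div hρ).2 hz
      linarith
    simp [hψ, this]

theorem brouwer_nonwandering (h : ℂ ≃ₜ ℂ) (hfix : ∀ z, h z ≠ z) {L : ℂ × ℂ → ℂ} (hL : IsOL h L)
    (x₀ : ℂ) (hnw : ∀ ε > 0, ∃ (x : ℂ) (m : ℕ), 1 ≤ m ∧ dist x x₀ < ε ∧ dist (h^[m] x) x₀ < ε) :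
    False := by
  classical
  obtain ⟨r, hr, hfree⟩ : ∃ r > 0, ∀ z, dist z x₀ < 3 * r → dist (h z) x₀ < 3 * r → False := by
    have hd : 0 < dist (h x₀) x₀ := dist_pos.2 (hfix x₀)
    obtain ⟨δ, hδ, hc⟩ := Metric.continuousAt_iff.1 (h.continuous.continuousAt (x := x₀)) _ (half_pos hd)
    refine ⟨min δ (dist (h x₀) x₀ / 2) / 3, by positivity, ?_⟩
    intro z h1 h2
    have e : 3 * (min δ (dist (h x₀) x₀ / 2) / 3) = min δ (dist (h x₀) x₀ / 2) := by ring
    rw [e] at h1 h2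
    have h3 := hc (lt_of_lt_of_le h1 (min_le_left _ _))
    have h4 := lt_of_lt_of_le h2 (min_le_right _ _)
    have h5 := dist_triangle_left (h x₀) x₀ (h z)
    linarith
  obtain ⟨x, m, hm, hx, hmx⟩ := hnw r hr
  have hex : ∃ i : ℕ, 1 ≤ i ∧ dist (h^[i] x) x < 2 * r :=
    ⟨m, hm, by linarith [dist_triangle_right (h^[m] x) x x₀]⟩
  set i := Nat.find hex with hi
  obtain ⟨hi1, hi2⟩ := Nat.find_spec hex
  rw [← hi] at hi1 hi2
  have himin : ∀ j, 1 ≤ j → j < i → 2 * r ≤ dist (h^[j] x) x := by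
    intro j h1 h2
    by_contra hcon
    exact Nat.find_min hex h2 ⟨h1, not_le.1 hcon⟩
  obtain ⟨φ, L', hL', hφ, hφo⟩ := exists_push x (h^[i] x - x) (2 * r) (by rwa [← dist_eq_norm])
  rw [add_sub_cancel] at hφ
  have hφin : ∀ z, dist (φ z) x < 2 * r → dist z x < 2 * r := by
    intro z hz
    by_contra hcon
    rw [hφo z (by rw [← dist_eq_norm]; exact not_lt.1 hcon)] at hz
    exact hcon hz
  have hφin' : ∀ z, dist z x < 2 * r → dist (φ z) x < 2 * r := by
    intro z hz
    by_contra hcon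
    have := hφo (φ z) (by rw [← dist_eq_norm]; exact not_lt.1 hcon)
    rw [φ.injective this] at hcon
    exact hcon hz
  have hball : ∀ z, dist z x < 2 * r → dist z x₀ < 3 * r := by
    intro z hz
    linarith [dist_triangle z x x₀]
  refine brouwer_periodic (h.trans φ) ?_ (hL'.comp hL h.continuous h.injective) x i hi1 ?_
  · intro z hz
    change φ (h z) = z at hz
    by_cases hb : dist (h z) x < 2 * r
    · have := hφin' _ hb
      rw [hz] at this
      exact hfree z (hball _ this) (hball _ hb)
    · rw [hφo _ (by rw [← dist_eq_norm]; exact not_lt.1 hb)] at hz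
      exact hfix z hz
  · have hj : ∀ j, j < i → (h.trans φ)^[j] x = h^[j] x := by
      intro j
      induction j with
      | zero => simp
      | succ j ih =>
        intro hlt
        rw [Function.iterate_succ_apply', ih (by omega), Function.iterate_succ_apply']
        change φ (h _) = _
        apply hφo
        rw [← dist_eq_norm, ← Function.iterate_succ_apply' h]
        exact himin _ (by omega) hlt
    obtain ⟨k, hk⟩ : ∃ k, i = k + 1 := ⟨i - 1, by omega⟩
    rw [hk, Function.iterate_succ_apply', hj k (by omega)]
    change φ (h _) = _
    rw [← Function.iterate_succ_apply' h, Nat.succ_eq_add_one, ← hk, hφ]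

lemma exists_V (h : ℂ ≃ₜ ℂ) : ∃ (V : ℂ × ℂ → ℂ) (d : ℤ), Continuous V ∧
    (∀ w ζ, Complex.exp (V (w, ζ)) = h (w + Complex.exp ζ) - h w) ∧
    ∀ w ζ (k : ℤ), V (w, ζ + k * (2 * Real.pi * Complex.I)) = V (w, ζ) + k * (d * (2 * Real.pi * Complex.I)) := by
  have hc := h.continuous
  obtain ⟨V, hVc, hV⟩ := exists_clog (convex_univ (E := ℂ × ℂ)) Set.univ_nonempty isOpen_univ
    (g := fun p => h (p.1 + Complex.exp p.2) - h p.1) (by fun_prop) (fun p _ => by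
      rw [sub_ne_zero]
      intro e
      have := h.injective e
      simp at this)
  rw [continuousOn_univ] at hVc
  have hV' : ∀ w ζ, Complex.exp (V (w, ζ)) = h (w + Complex.exp ζ) - h w := fun w ζ => hV (w, ζ) trivial
  have h1 : ∀ p : ℂ × ℂ, Complex.exp (V (p.1, p.2 + 2 * Real.pi * Complex.I) - V p) = 1 := by
    rintro ⟨w, ζ⟩
    rw [Complex.exp_sub, hV', hV', Complex.exp_add, Complex.exp_two_pi_mul_I, mul_one]
    rw [← hV']
    exact div_self (Complex.exp_ne_zero _)
  obtain ⟨d, hd⟩ := Complex.exp_eq_one_iff.1 (h1 0)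
  have h2 : ∀ w ζ, V (w, ζ + 2 * Real.pi * Complex.I) = V (w, ζ) + d * (2 * Real.pi * Complex.I) := by
    intro w ζ
    have := clog_const (isPreconnected_univ (α := ℂ × ℂ))
      (u := fun p : ℂ × ℂ => V (p.1, p.2 + 2 * Real.pi * Complex.I) - V p) (by fun_prop) (fun p _ => h1 p)
      (Set.mem_univ (w, ζ)) (Set.mem_univ 0)
    simp only at this
    rw [hd] at this
    linear_combination this
  refine ⟨V, d, hVc, hV', ?_⟩
  intro w ζ k
  induction k with
  | zero => simp
  | succ k ih =>
    push_cast at ih ⊢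
    have e : ζ + (k + 1) * (2 * Real.pi * Complex.I) = (ζ + k * (2 * Real.pi * Complex.I)) + 2 * Real.pi * Complex.I := by ring
    rw [e, h2, ih]; ring
  | pred k ih =>
    push_cast at ih ⊢
    have e : ζ + (-k) * (2 * Real.pi * Complex.I) = (ζ + (-k - 1) * (2 * Real.pi * Complex.I)) + 2 * Real.pi * Complex.I := by ring
    rw [e, h2] at ih
    linear_combination ih

theorem ol_sq (h : ℂ ≃ₜ ℂ) : ∃ L, IsOL (h ∘ h) L := by
  have hc := h.continuous
  obtain ⟨V, d, hVc, hV, hVs⟩ := exists_V h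
  obtain ⟨V', d', hVc', hV', hVs'⟩ := exists_V h.symm
  have hpi : (2 * Real.pi * Complex.I : ℂ) ≠ 0 := Complex.two_pi_I_ne_zero
  have hdd : d' * d = 1 := by
    have := clog_const (isPreconnected_univ (α := ℂ × ℂ))
      (u := fun p : ℂ × ℂ => V' (h p.1, V p) - p.2) (by fun_prop) (by
        rintro ⟨w, ζ⟩ -
        rw [Complex.exp_sub, hV', hV]
        simp)
      (Set.mem_univ (0, 0 + (1 : ℤ) * (2 * Real.pi * Complex.I))) (Set.mem_univ (0, 0))
    simp only at this
    rw [hVs, Int.cast_one, one_mul, hVs'] at this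
    have h3 : ((d' * d : ℤ) : ℂ) = 1 := by
      push_cast
      apply mul_right_cancel₀ hpi
      linear_combination this
    exact_mod_cast h3
  have hd2 : d * d = 1 := by
    rcases Int.eq_one_or_neg_one_of_mul_eq_one' hdd with ⟨_, e⟩ | ⟨_, e⟩ <;> rw [e] <;> rfl
  set W : ℂ × ℂ → ℂ := fun p => V (h p.1, V p) - p.2 with hW
  have hWc : Continuous W := by simp only [hW]; fun_prop
  have hWe : ∀ w ζ, Complex.exp (W (w, ζ)) * Complex.exp ζ = h (h (w + Complex.exp ζ)) - h (h w) := by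
    intro w ζ
    simp only [hW]
    rw [← Complex.exp_add, sub_add_cancel, hV, hV, add_sub_cancel]
  have hWp : ∀ w ζ (k : ℤ), W (w, ζ + k * (2 * Real.pi * Complex.I)) = W (w, ζ) := by
    intro w ζ k
    simp only [hW]
    have e : V (w, ζ) + k * (d * (2 * Real.pi * Complex.I)) = V (w, ζ) + ((k * d : ℤ) : ℂ) * (2 * Real.pi * Complex.I) := by
      push_cast; ring
    rw [hVs, e, hVs]
    have : (d : ℂ) * d = 1 := by exact_mod_cast hd2
    push_cast
    linear_combination (k * (2 * Real.pi * Complex.I)) * this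
  have hWq : ∀ w ζ ζ', Complex.exp ζ = Complex.exp ζ' → W (w, ζ) = W (w, ζ') := by
    intro w ζ ζ' e
    obtain ⟨n, hn⟩ := Complex.exp_eq_exp_iff_exists_int.1 e
    rw [hn, hWp]
  refine ⟨fun p => W (p.2, Complex.log (p.1 - p.2)), ?_, ?_⟩
  · rintro ⟨z, w⟩ (hp : z ≠ w)
    have hne := sub_ne_zero.2 hp
    apply ContinuousAt.continuousWithinAt
    by_cases hs : z - w ∈ Complex.slitPlane
    · have hl : ContinuousAt (fun p : ℂ × ℂ => Complex.log (p.1 - p.2)) (z, w) :=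
        ContinuousAt.clog (by fun_prop) hs
      exact hWc.continuousAt.comp (continuousAt_snd.prodMk hl)
    · have hs' : -(z - w) ∈ Complex.slitPlane := by
        rw [Complex.mem_slitPlane_iff] at hs ⊢
        push Not at hs
        left
        have : (z - w).re ≠ 0 := fun e => hne (Complex.ext e hs.2)
        rw [Complex.neg_re]
        have := lt_of_le_of_ne hs.1 this
        linarith
      have hl : ContinuousAt (fun p : ℂ × ℂ => Complex.log (-(p.1 - p.2)) + Real.pi * Complex.I) (z, w) :=
        ContinuousAt.add (ContinuousAt.clog (f := fun p : ℂ × ℂ => -(p.1 - p.2)) (by fun_prop) hs') continuousAt_const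
      have h1 : ContinuousAt (fun p : ℂ × ℂ => W (p.2, Complex.log (-(p.1 - p.2)) + Real.pi * Complex.I)) (z, w) :=
        hWc.continuousAt.comp (continuousAt_snd.prodMk hl)
      refine h1.congr ?_
      have : {p : ℂ × ℂ | p.1 - p.2 ≠ 0} ∈ 𝓝 (z, w) :=
        IsOpen.mem_nhds (isOpen_ne_fun (by fun_prop) (by fun_prop)) hne
      filter_upwards [this] with p hp
      apply hWq
      rw [Complex.exp_add, Complex.exp_log (neg_ne_zero.2 hp), Complex.exp_log hp, Complex.exp_pi_mul_I]
      ring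
  · intro z w hzw
    have hne := sub_ne_zero.2 hzw
    have := hWe w (Complex.log (z - w))
    rw [Complex.exp_log hne, add_sub_cancel] at this
    exact this

instance locPathAddCircle : LocallyPathConnectedSpace (AddCircle (1:ℝ)) :=
  (isQuotientMap_quotient_mk' : IsQuotientMap
    (Quotient.mk (QuotientAddGroup.leftRel (AddSubgroup.zmultiples (1:ℝ))))).locallyPathConnectedSpace


lemma projA_continuous : Continuous projA := by
  unfold projA
  exact ((AddCircle.continuous_mk' (1:ℝ)).comp continuous_fst).prodMk continuous_snd

lemma projA_add (z : ℝ × ℝ) (k : ℤ) : projA (z + ((k : ℝ), 0)) = projA z := by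
  unfold projA
  ext
  · have : ((k : ℝ) : AddCircle (1:ℝ)) = 0 := by
      rw [AddCircle.coe_eq_zero_iff]; exact ⟨k, by simp⟩
    simp [AddCircle.coe_add, this]
  · simp

lemma projA_eq {z w : ℝ × ℝ} (h : projA z = projA w) : ∃ k : ℤ, w = z + ((k : ℝ), 0) := by
  unfold projA at h
  obtain ⟨h1, h2⟩ := Prod.mk.inj h
  have h3 : ((w.1 - z.1 : ℝ) : AddCircle (1:ℝ)) = 0 := by
    rw [AddCircle.coe_sub, h1, sub_self]
  obtain ⟨k, hk⟩ := (AddCircle.coe_eq_zero_iff (1:ℝ)).1 h3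
  refine ⟨k, ?_⟩
  ext
  · simp at hk ⊢; linarith
  · simp [h2]

/-- The planar model of the annulus. -/
def EA (q : Ann) : ℂ := (Real.exp (2 * Real.pi * q.2) : ℂ) * (AddCircle.toCircle q.1 : ℂ)

lemma EA_continuous : Continuous EA := by
  unfold EA
  have h1 : Continuous (fun q : Ann => (AddCircle.toCircle q.1 : ℂ)) :=
    continuous_subtype_val.comp (AddCircle.continuous_toCircle.comp continuous_fst)
  have h2 : Continuous (fun q : Ann => (Real.exp (2 * Real.pi * q.2) : ℂ)) := by fun_prop
  exact h2.mul h1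

lemma EA_norm (q : Ann) : ‖EA q‖ = Real.exp (2 * Real.pi * q.2) := by
  unfold EA
  rw [norm_mul, Circle.norm_coe, mul_one, Complex.norm_real, Real.norm_eq_abs, abs_of_pos (Real.exp_pos _)]

lemma EA_injective : Function.Injective EA := by
  intro q q' h
  have hn := congrArg norm h
  rw [EA_norm, EA_norm] at hn
  have h2 : q.2 = q'.2 := by
    have := Real.exp_injective hn
    exact mul_left_cancel₀ (by positivity) this
  have h1 : q.1 = q'.1 := by
    unfold EA at h
    rw [h2] at h
    have := mul_left_cancel₀ (by exact_mod_cast (Real.exp_pos _).ne') h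
    exact AddCircle.injective_toCircle one_ne_zero (Subtype.ext this)
  exact Prod.ext h1 h2

lemma EA_proj (z : ℝ × ℝ) : EA (projA z) = Complex.exp (2 * Real.pi * (z.2 + z.1 * Complex.I)) := by
  unfold EA projA
  simp only
  rw [AddCircle.toCircle_apply_mk, Circle.coe_exp, Complex.ofReal_exp, ← Complex.exp_add]
  congr 1
  push_cast
  ring

/-- Separation. -/
lemma essential_of_loop {Γ : Set Ann} (hΓ : IsCompact Γ) {γ : ℝ → ℝ × ℝ} (hγ : Continuous γ)
    {k : ℤ} (hk : k ≠ 0) (h1 : γ 1 = γ 0 + ((k : ℝ), 0))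
    (hmem : ∀ s ∈ Set.Icc (0:ℝ) 1, projA (γ s) ∈ Γ) : EssentialA Γ := by
  rintro x hx ⟨hua, hub⟩
  have hopen : IsOpen Γᶜ := hΓ.isClosed.isOpen_compl
  set K := connectedComponentIn Γᶜ x with hK
  have hKo : IsOpen K := hopen.connectedComponentIn
  have hKc : IsConnected K := isConnected_connectedComponentIn_iff.2 hx
  have hKp : IsPathConnected K := hKo.isConnected_iff_isPathConnected.1 hKc
  have hbd : IsCompact (Prod.snd '' Γ) := hΓ.image continuous_snd
  obtain ⟨A, hA⟩ := hbd.bddAbove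
  obtain ⟨B, hB⟩ := hbd.bddBelow
  obtain ⟨_, ⟨q1, hq1, rfl⟩, hq1A⟩ := not_bddAbove_iff.1 hua A
  obtain ⟨_, ⟨q0, hq0, rfl⟩, hq0B⟩ := not_bddBelow_iff.1 hub B
  obtain ⟨σ, hσ⟩ := hKp.joinedIn q0 hq0 q1 hq1
  -- clamp
  set cl : ℝ → ℝ := fun s => max 0 (min s 1) with hcl
  have hclm : ∀ s, cl s ∈ Set.Icc (0:ℝ) 1 := fun s =>
    ⟨le_max_left _ _, max_le zero_le_one (min_le_right _ _)⟩
  have hclc : Continuous cl := by simp only [hcl]; fun_prop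
  have cl0 : cl 0 = 0 := by simp [hcl]
  have cl1 : cl 1 = 1 := by simp [hcl]
  set c : ℝ → ℂ := fun s => EA (projA (γ (cl s))) with hc
  have hEc := EA_continuous
  have hpc := projA_continuous
  have hcc : Continuous c := by simp only [hc]; fun_prop
  set S : ℝ → ℂ := fun t => EA (σ.extend t) with hS
  have hSc : Continuous S := by
    simp only [hS]
    exact hEc.comp σ.continuous_extend
  have hσK : ∀ t, σ.extend t ∈ K := by
    intro t
    have : σ.extend t ∈ Set.range σ.extend := ⟨t, rfl⟩
    rw [Path.extend_range] at this
    obtain ⟨u, hu⟩ := this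
    rw [← hu]; exact hσ u
  have hne : ∀ s t, c s - S t ≠ 0 := by
    intro s t
    rw [sub_ne_zero]
    intro e
    have e' := EA_injective e
    have h2 := hmem _ (hclm s)
    rw [e'] at h2
    exact connectedComponentIn_subset _ _ (hσK t) h2
  obtain ⟨Λ, hΛc, hΛ⟩ := exists_clog (convex_univ (E := ℝ × ℝ)) Set.univ_nonempty isOpen_univ
    (g := fun p => c p.1 - S p.2) (by fun_prop) (fun p _ => hne _ _)
  rw [continuousOn_univ] at hΛc
  have hΛ' : ∀ s t, Complex.exp (Λ (s, t)) = c s - S t := fun s t => hΛ (s, t) trivial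
  have hc01 : c 1 = c 0 := by
    simp only [hc, cl0, cl1, h1, projA_add]
  have hD : Λ (1, 0) - Λ (0, 0) = Λ (1, 1) - Λ (0, 1) := by
    refine clog_const (isPreconnected_univ (α := ℝ)) (u := fun t => Λ (1, t) - Λ (0, t)) (by fun_prop) ?_
      (Set.mem_univ 0) (Set.mem_univ 1)
    intro t _
    rw [Complex.exp_sub, hΛ', hΛ', hc01]
    exact div_self (hne _ _)
  have hcn : ∀ s, c s ≠ 0 := fun s => by
    rw [← norm_pos_iff]; simp only [hc]; rw [EA_norm]; exact Real.exp_pos _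
  have hSn : ∀ s, S s ≠ 0 := fun s => by
    rw [← norm_pos_iff]; simp only [hS]; rw [EA_norm]; exact Real.exp_pos _
  have hpi := Real.pi_pos
  have low : ∀ s, ‖S 0‖ < ‖c s‖ := by
    intro s
    simp only [hS, hc]
    rw [EA_norm, EA_norm, Real.exp_lt_exp, Path.extend_zero]
    have := hB ⟨_, hmem _ (hclm s), rfl⟩
    have : q0.2 < (projA (γ (cl s))).2 := lt_of_lt_of_le hq0B this
    gcongr
  have high : ∀ s, ‖c s‖ < ‖S 1‖ := by
    intro s
    simp only [hS, hc]
    rw [EA_norm, EA_norm, Real.exp_lt_exp, Path.extend_one]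
    have := hA ⟨_, hmem _ (hclm s), rfl⟩
    have : (projA (γ (cl s))).2 < q1.2 := lt_of_le_of_lt this hq1A
    gcongr
  have slit : ∀ z : ℂ, ‖z‖ < 1 → 1 - z ∈ Complex.slitPlane := fun z hz => by
    rw [sub_eq_add_neg]
    exact Complex.mem_slitPlane_of_norm_lt_one (by rwa [norm_neg])
  have s0 : ∀ s, 1 - S 0 / c s ∈ Complex.slitPlane := fun s => slit _ (by
    rw [norm_div, div_lt_one (norm_pos_iff.2 (hcn s))]; exact low s)
  have s1 : ∀ s, 1 - c s / S 1 ∈ Complex.slitPlane := fun s => slit _ (by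
    rw [norm_div, div_lt_one (norm_pos_iff.2 (hSn 1))]; exact high s)
  have D1 : Λ (1, 1) - Λ (0, 1) = 0 := by
    have := clog_const (isPreconnected_univ (α := ℝ))
      (u := fun s => (Λ (s, 1) - Complex.log (1 - c s / S 1)) - (Λ (0, 1) - Complex.log (1 - c 0 / S 1))) ?_ ?_
      (Set.mem_univ 0) (Set.mem_univ 1)
    · simp only [hc01] at this
      linear_combination -this
    · have : Continuous fun s => Complex.log (1 - c s / S 1) := Continuous.clog (by fun_prop) s1
      fun_prop
    · intro s _
      have e1 : ∀ s, Complex.exp (Λ (s, 1) - Complex.log (1 - c s / S 1)) = - S 1 := by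
        intro s
        have hs := Complex.slitPlane_ne_zero (s1 s)
        rw [Complex.exp_sub, hΛ', Complex.exp_log hs, div_eq_iff hs]
        have := hSn 1
        field_simp
        ring
      rw [Complex.exp_sub, e1, e1, div_self (neg_ne_zero.2 (hSn 1))]
  have D0 : Λ (1, 0) - Λ (0, 0) = 2 * Real.pi * (k * Complex.I) := by
    have := clog_const (isPreconnected_univ (α := ℝ))
      (u := fun s => Λ (s, 0) - Complex.log (1 - S 0 / c s)
        - 2 * Real.pi * ((γ (cl s)).2 + (γ (cl s)).1 * Complex.I)) ?_ ?_
      (Set.mem_univ 0) (Set.mem_univ 1)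
    · simp only [hc01, cl0, cl1, h1] at this
      simp only [Prod.fst_add, Prod.snd_add, add_zero] at this
      push_cast at this
      linear_combination -this
    · have : Continuous fun s => Complex.log (1 - S 0 / c s) :=
        Continuous.clog (continuous_const.sub (continuous_const.div hcc hcn)) s0
      fun_prop
    · intro s _
      have hs := Complex.slitPlane_ne_zero (s0 s)
      rw [Complex.exp_sub, Complex.exp_sub, hΛ', Complex.exp_log hs, ← EA_proj]
      change (c s - S 0) / (1 - S 0 / c s) / c s = 1
      have := hcn s
      rw [div_div, div_eq_one_iff_eq (mul_ne_zero hs this)]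
      field_simp
  rw [hD, D1] at D0
  have : (2 * Real.pi * (k * Complex.I) : ℂ) ≠ 0 := by
    have h1 : (k : ℂ) ≠ 0 := by exact_mod_cast hk
    have h2 : (Real.pi : ℂ) ≠ 0 := by exact_mod_cast hpi.ne'
    simp [h1, hpi.ne']
  exact this D0.symm

/-- Lipschitz paths. -/
lemma exists_lip_path {O : Set (ℝ × ℝ)} (hO : IsOpen O) {z w : ℝ × ℝ}
    (hw : w ∈ connectedComponentIn O z) :
    ∃ (C : ℝ) (γ : ℝ → ℝ × ℝ), 0 ≤ C ∧ (∀ s t, dist (γ s) (γ t) ≤ C * |s - t|) ∧ γ 0 = z ∧ γ 1 = w ∧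
      ∀ t ∈ Set.Icc (0:ℝ) 1, γ t ∈ O := by
  have hz : z ∈ O := by
    by_contra h
    rw [connectedComponentIn_eq_empty h] at hw
    exact hw
  set A : Set (ℝ × ℝ) := {w | ∃ (C : ℝ) (γ : ℝ → ℝ × ℝ), 0 ≤ C ∧
    (∀ s t, dist (γ s) (γ t) ≤ C * |s - t|) ∧ γ 0 = z ∧ γ 1 = w ∧ ∀ t ∈ Set.Icc (0:ℝ) 1, γ t ∈ O} with hA
  have star : ∀ c ε, Metric.ball c ε ⊆ O → ∀ w ∈ Metric.ball c ε, ∀ w' ∈ Metric.ball c ε,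
      w ∈ A → w' ∈ A := by
    rintro c ε hsub w hw w' hw' ⟨C, γ, hC, hL, h0, h1, hm⟩
    refine ⟨2 * C + 2 * ‖w' - w‖, fun t => γ (min (2 * t) 1) + (max (2 * t - 1) 0) • (w' - w), by positivity,
      ?_, ?_, ?_, ?_⟩
    · intro s t
      have e1 : |min (2 * s) 1 - min (2 * t) 1| ≤ 2 * |s - t| := by
        have := abs_min_sub_min_le_max (2 * s) 1 (2 * t) 1
        simp only [sub_self, abs_zero] at this
        rw [← mul_sub, abs_mul, abs_two] at this
        exact this.trans (max_le le_rfl (by positivity))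
      have e2 : |max (2 * s - 1) 0 - max (2 * t - 1) 0| ≤ 2 * |s - t| := by
        have := abs_max_sub_max_le_abs (2 * s - 1) (2 * t - 1) 0
        have h : 2 * s - 1 - (2 * t - 1) = 2 * (s - t) := by ring
        rw [h, abs_mul, abs_two] at this
        exact this
      refine (dist_add_add_le _ _ _ _).trans ?_
      have e3 : dist ((max (2 * s - 1) 0) • (w' - w)) ((max (2 * t - 1) 0) • (w' - w)) ≤
          2 * |s - t| * ‖w' - w‖ := by
        rw [dist_eq_norm, ← sub_smul, norm_smul, Real.norm_eq_abs]
        gcongr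
      have e4 := (hL (min (2 * s) 1) (min (2 * t) 1)).trans (mul_le_mul_of_nonneg_left e1 hC)
      linarith
    · simp [h0]
    · norm_num [h1]
    · intro t ht
      rcases le_total (2 * t) 1 with h | h
      · have : max (2 * t - 1) 0 = 0 := max_eq_right (by linarith)
        beta_reduce
        rw [this, min_eq_left h, zero_smul, add_zero]
        exact hm _ ⟨by linarith [ht.1], h⟩
      · beta_reduce
        rw [min_eq_right h, h1, max_eq_left (by linarith)]
        apply hsub
        refine (convex_ball c ε).add_smul_sub_mem hw hw' ⟨by linarith, by linarith [ht.2]⟩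
  have hAO : A ⊆ O := by
    rintro w ⟨C, γ, hC, hL, h0, h1, hm⟩
    rw [← h1]; exact hm 1 (by simp)
  have hzA : z ∈ A := ⟨0, fun _ => z, le_rfl, by simp, rfl, rfl, fun _ _ => hz⟩
  have hAo : IsOpen A := by
    rw [Metric.isOpen_iff]
    intro w hw
    obtain ⟨ε, hε, hb⟩ := Metric.isOpen_iff.1 hO w (hAO hw)
    exact ⟨ε, hε, fun w' hw' => star w ε hb w (Metric.mem_ball_self hε) w' hw' hw⟩
  refine (isPreconnected_connectedComponentIn (F := O) (x := z)).subset_of_closure_inter_subset hAo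
    ⟨z, mem_connectedComponentIn hz, hzA⟩ ?_ hw
  rintro w ⟨hwc, hwO⟩
  obtain ⟨ε, hε, hb⟩ := Metric.isOpen_iff.1 hO w (connectedComponentIn_subset _ _ hwO)
  obtain ⟨w', hw', hd⟩ := Metric.mem_closure_iff.1 hwc ε hε
  exact star w ε hb w' (by rwa [Metric.mem_ball, dist_comm]) w (Metric.mem_ball_self hε) hw'

/-- The minimal loop. -/
lemma exists_simple_loop {V : Set Ann} {C0 : ℝ} {γ0 : ℝ → ℝ × ℝ} (hC0 : 0 ≤ C0)
    (hL0 : ∀ s t, dist (γ0 s) (γ0 t) ≤ C0 * |s - t|) {k0 : ℤ} (hk0 : k0 ≠ 0)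
    (h1 : γ0 1 = γ0 0 + ((k0 : ℝ), 0)) (hV : ∀ t ∈ Set.Icc (0:ℝ) 1, projA (γ0 t) ∈ V) :
    ∃ Γ ⊆ V, IsSimpleClosedCurveA Γ ∧ EssentialA Γ := by
  have lipc : ∀ {C : ℝ} {γ : ℝ → ℝ × ℝ}, 0 ≤ C → (∀ s t, dist (γ s) (γ t) ≤ C * |s - t|) → Continuous γ := by
    intro C γ hC h
    exact (LipschitzWith.of_dist_le_mul (K := ⟨C, hC⟩) (fun s t => h s t)).continuous
  have hγ0 := lipc hC0 hL0
  set P : Set Ann := (fun t => projA (γ0 t)) '' Set.Icc (0:ℝ) 1 with hP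
  have hPc : IsCompact P := isCompact_Icc.image (projA_continuous.comp hγ0)
  have hPV : P ⊆ V := by rintro _ ⟨t, ht, rfl⟩; exact hV t ht
  set E := projA ⁻¹' P with hE
  have hEc : IsClosed E := hPc.isClosed.preimage projA_continuous
  have hEt : ∀ z (k : ℤ), z ∈ E → z - ((k:ℝ), (0:ℝ)) ∈ E := by
    intro z k hz
    have : projA (z - ((k:ℝ), (0:ℝ))) = projA z := by
      rw [← projA_add _ k, sub_add_cancel]
    simp only [hE, Set.mem_preimage, this]; exact hz
  obtain ⟨M, hM⟩ : ∃ M : ℝ, ∀ z ∈ E, |z.2| ≤ M := by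
    obtain ⟨M, hM⟩ := (hPc.image continuous_snd).isBounded.exists_norm_le
    exact ⟨M, fun z hz => hM z.2 ⟨projA z, hz, rfl⟩⟩
  set S : Set (ℝ × (ℝ → ℝ × ℝ)) := {p | p.1 ∈ Set.Icc 0 C0 ∧
    (∀ s t, dist (p.2 s) (p.2 t) ≤ p.1 * |s - t|) ∧ (∀ t ∈ Set.Icc (0:ℝ) 1, p.2 t ∈ E) ∧
    (p.2 0).1 ∈ Set.Icc (0:ℝ) 1 ∧ (p.2 1 - p.2 0).1 ∈ ((↑) '' {k : ℤ | k ≠ 0} : Set ℝ) ∧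
    (p.2 1 - p.2 0).2 = 0} with hS
  have hZ : IsClosed ((↑) '' {k : ℤ | k ≠ 0} : Set ℝ) :=
    Int.isClosedEmbedding_coe_real.isClosedMap _ (isClosed_discrete _)
  have hSc : IsClosed S := by
    simp only [hS, Set.ofPred_and, Set.ofPred_forall]
    refine IsClosed.inter (isClosed_Icc.preimage continuous_fst) (IsClosed.inter ?_ (IsClosed.inter ?_
      (IsClosed.inter ?_ (IsClosed.inter ?_ ?_))))
    · exact isClosed_iInter fun s => isClosed_iInter fun t => isClosed_le (by fun_prop) (by fun_prop)
    · refine isClosed_iInter fun s => isClosed_iInter fun _ => hEc.preimage (by fun_prop)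
    · exact isClosed_Icc.preimage (f := fun p : ℝ × (ℝ → ℝ × ℝ) => (p.2 0).1) (by fun_prop)
    · exact hZ.preimage (f := fun p : ℝ × (ℝ → ℝ × ℝ) => (p.2 1 - p.2 0).1) (by fun_prop)
    · exact isClosed_eq (by fun_prop) (by fun_prop)
  have hScomp : IsCompact S := by
    refine IsCompact.of_isClosed_subset (isCompact_Icc.prod (isCompact_univ_pi
      (fun t : ℝ => isCompact_closedBall (0 : ℝ × ℝ) (1 + |M| + C0 * |t|)))) hSc ?_ (s := Set.Icc 0 C0 ×ˢ _)
    rintro ⟨C, γ⟩ ⟨hC, hL, hm, h01, -, -⟩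
    refine ⟨hC, ?_⟩
    intro t _
    simp only at hL hm h01 hC ⊢
    rw [Metric.mem_closedBall]
    have a1 := hL t 0
    rw [sub_zero] at a1
    have a2 : dist (γ 0) 0 ≤ 1 + |M| := by
      rw [dist_zero_right, Prod.norm_def]
      have := (hM _ (hm 0 (by simp))).trans (le_abs_self M)
      apply max_le
      · rw [Real.norm_eq_abs, abs_of_nonneg h01.1]; linarith [h01.2, abs_nonneg M]
      · rw [Real.norm_eq_abs]; linarith
    have a3 := dist_triangle (γ t) (γ 0) 0
    have a4 : C * |t| ≤ C0 * |t| := mul_le_mul_of_nonneg_right hC.2 (abs_nonneg _)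
    linarith
  have hSne : S.Nonempty := by
    refine ⟨(C0, fun t => γ0 t - ((⌊(γ0 0).1⌋ : ℝ), (0:ℝ))), ⟨hC0, le_rfl⟩, ?_, ?_, ?_, ?_, ?_⟩
    · intro s t; simpa using hL0 s t
    · intro t ht; exact hEt _ _ ⟨t, ht, rfl⟩
    · simp only [Prod.fst_sub]
      exact ⟨Int.fract_nonneg _, (Int.fract_lt_one _).le⟩
    · exact ⟨k0, hk0, by simp [h1]⟩
    · simp [h1]
  obtain ⟨⟨C, γ⟩, ⟨hC, hL, hm, h01, ⟨k, hk, hk1⟩, hk2⟩, hmin⟩ :=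
    hScomp.exists_isMinOn hSne continuous_fst.continuousOn
  simp only at hC hL hm h01 hk1 hk2
  have hmin' : ∀ C' γ', (C', γ') ∈ S → C ≤ C' := fun C' γ' h => hmin h
  have hγ := lipc hC.1 hL
  have hγ1 : γ 1 = γ 0 + ((k:ℝ), 0) := by
    rw [← sub_eq_iff_eq_add']
    exact Prod.ext hk1.symm hk2
  have hCpos : 0 < C := by
    rcases hC.1.lt_or_eq with h | h
    · exact h
    · exfalso
      have := hL 1 0
      rw [← h, zero_mul, dist_le_zero] at this
      rw [this, sub_self, Prod.fst_zero] at hk1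
      exact hk (by exact_mod_cast hk1)
  have hinj : ∀ s t, 0 ≤ s → s < t → t ≤ 1 → t - s < 1 → projA (γ s) ≠ projA (γ t) := by
    intro s t hs hst ht hd heq
    obtain ⟨m, hmm⟩ := projA_eq heq
    by_cases hm0 : m = 0
    · subst hm0
      have hts : γ t = γ s := by rw [hmm]; ext <;> simp
      set d := t - s with hdd
      have hmem : (C * (1 - d), fun u => γ (min (u * (1 - d)) s) + (γ (max (u * (1 - d) + d) t) - γ t)) ∈ S := by
        have g0 : γ (min (0 * (1 - d)) s) + (γ (max (0 * (1 - d) + d) t) - γ t) = γ 0 := by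
          rw [zero_mul, zero_add, min_eq_left hs, max_eq_right (by linarith), sub_self, add_zero]
        have g1 : γ (min (1 * (1 - d)) s) + (γ (max (1 * (1 - d) + d) t) - γ t) = γ 1 := by
          rw [one_mul, sub_add_cancel, min_eq_right (by linarith), max_eq_left ht, hts]; abel
        refine ⟨⟨by nlinarith, by nlinarith [hC.2]⟩, ?_, ?_, ?_, ?_, ?_⟩
        · intro u v
          refine (dist_add_add_le _ _ _ _).trans ?_
          rw [dist_sub_right]
          refine (add_le_add (hL _ _) (hL _ _)).trans ?_
          rw [← mul_add, mul_assoc]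
          refine mul_le_mul_of_nonneg_left ?_ hC.1
          have e : (1 - d) * |u - v| = |u * (1 - d) - v * (1 - d)| := by
            rw [← sub_mul, abs_mul, abs_of_pos (by linarith : 0 < 1 - d), mul_comm]
          simp only [e]
          generalize u * (1 - d) = a
          generalize v * (1 - d) = b
          have et : t = s + d := by rw [hdd]; ring
          rw [et, max_add_add_right, max_add_add_right, add_sub_add_right_eq_sub]
          rcases le_total a s with h1 | h1 <;> rcases le_total b s with h2 | h2 <;>
            simp only [h1, h2, min_eq_left, min_eq_right, max_eq_left, max_eq_right, sub_self, abs_zero,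
              add_zero, zero_add, le_refl]
          · rw [abs_of_nonpos (by linarith), abs_of_nonpos (by linarith), abs_of_nonpos (by linarith)]
            linarith
          · rw [abs_of_nonneg (by linarith), abs_of_nonneg (by linarith), abs_of_nonneg (by linarith)]
            linarith
        · intro u hu
          simp only
          have hu1 : u * (1 - d) ≤ 1 - d := by nlinarith [hu.2]
          have hu0 : 0 ≤ u * (1 - d) := mul_nonneg hu.1 (by linarith)
          rcases le_total (u * (1 - d)) s with h1 | h1
          · rw [min_eq_left h1, max_eq_right (by linarith), sub_self, add_zero]
            exact hm _ ⟨hu0, by linarith⟩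
          · rw [min_eq_right h1, max_eq_left (by linarith), hts, add_sub_cancel]
            exact hm _ ⟨by linarith, by linarith⟩
        · simp only [g0]; exact h01
        · simp only [g0, g1]; exact ⟨k, hk, hk1⟩
        · simp only [g0, g1]; exact hk2
      have := hmin' _ _ hmem
      have hd0 : 0 < d := by linarith
      nlinarith
    · have hmem : (C * (t - s), fun u => γ (s + u * (t - s)) - ((⌊(γ s).1⌋ : ℝ), (0:ℝ))) ∈ S := by
        refine ⟨⟨by nlinarith, by nlinarith [hC.2]⟩, ?_, ?_, ?_, ?_, ?_⟩
        · intro u v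
          simp only [dist_sub_right]
          refine (hL _ _).trans (le_of_eq ?_)
          rw [add_sub_add_left_eq_sub, ← sub_mul, abs_mul, abs_of_pos (by linarith : 0 < t - s)]
          ring
        · intro u hu
          exact hEt _ _ (hm _ ⟨by nlinarith [hu.1], by nlinarith [hu.2]⟩)
        · simp only [Prod.fst_sub, zero_mul, add_zero]
          exact ⟨Int.fract_nonneg _, (Int.fract_lt_one _).le⟩
        · exact ⟨m, hm0, by simp [hmm]⟩
        · simp [hmm]
      have := hmin' _ _ hmem
      nlinarith
  have hp01 : projA (γ 0) = projA (γ 1) := by rw [hγ1, projA_add]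
  set e : AddCircle (1:ℝ) → Ann := AddCircle.liftIco 1 0 (fun t => projA (γ t)) with he
  have hec : Continuous e :=
    AddCircle.liftIco_zero_continuous hp01 (projA_continuous.comp hγ).continuousOn
  have hev : ∀ t ∈ Set.Ico (0:ℝ) 1, e t = projA (γ t) := fun t ht => AddCircle.liftIco_zero_coe_apply ht
  have hrep : ∀ x : AddCircle (1:ℝ), ∃ t ∈ Set.Ico (0:ℝ) 1, (t : AddCircle (1:ℝ)) = x := by
    intro x
    obtain ⟨t, rfl⟩ := QuotientAddGroup.mk_surjective x
    refine ⟨Int.fract t, ⟨Int.fract_nonneg _, Int.fract_lt_one _⟩, ?_⟩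
    have : ((Int.fract t - t : ℝ) : AddCircle (1:ℝ)) = 0 := by
      rw [AddCircle.coe_eq_zero_iff]
      refine ⟨-⌊t⌋, ?_⟩
      have := Int.self_sub_floor t
      push_cast [zsmul_eq_mul]
      linarith
    rw [AddCircle.coe_sub, sub_eq_zero] at this
    exact this
  have hei : Function.Injective e := by
    intro x y hxy
    obtain ⟨s, hs, rfl⟩ := hrep x
    obtain ⟨t, ht, rfl⟩ := hrep y
    rw [hev s hs, hev t ht] at hxy
    rcases lt_trichotomy s t with h | h | h
    · exact absurd hxy (hinj s t hs.1 h ht.2.le (by linarith [hs.1, ht.2]))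
    · rw [h]
    · exact absurd hxy.symm (hinj t s ht.1 h hs.2.le (by linarith [ht.1, hs.2]))
  have hemb : IsClosedEmbedding e := hec.isClosedEmbedding hei
  have hrange : ∀ t ∈ Set.Icc (0:ℝ) 1, projA (γ t) ∈ Set.range e := by
    intro t ht
    rcases ht.2.lt_or_eq with h | h
    · exact ⟨t, hev t ⟨ht.1, h⟩⟩
    · exact ⟨((0:ℝ) : AddCircle (1:ℝ)), by rw [hev 0 (by simp), h, hp01]⟩
  refine ⟨Set.range e, ?_, ⟨e, hemb.isEmbedding, rfl⟩, ?_⟩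
  · rintro _ ⟨x, rfl⟩
    obtain ⟨t, ht, rfl⟩ := hrep x
    rw [hev t ht]
    exact hPV (hm t ⟨ht.1, ht.2.le⟩)
  · exact essential_of_loop (isCompact_range hec) hγ hk hγ1 hrange

lemma projA_open : IsOpenMap projA := by
  have : projA = Prod.map (fun x : ℝ => (x : AddCircle (1:ℝ))) id := by ext z <;> rfl
  rw [this]
  exact QuotientAddGroup.isOpenMap_coe.prodMap IsOpenMap.id

/-- **Lemma 3.5.**  If `f` is a non-wandering homeomorphism of the open annulus
homotopic to the identity and without periodic points, then every nonempty open
`f`-invariant set contains an essential simple closed curve. -/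
theorem statement13 (f : Ann ≃ₜ Ann) (G : (ℝ × ℝ) ≃ₜ (ℝ × ℝ)) (hG : IsLiftA f G)
    (hnw : NonWandering (⇑f)) (hnp : ¬ HasPeriodicPoint (⇑f))
    (V : Set Ann) (hVo : IsOpen V) (hVne : V.Nonempty) (hVinv : f '' V = V) :
    ∃ Γ ⊆ V, IsSimpleClosedCurveA Γ ∧ EssentialA Γ := by
  by_contra hcon
  set O := projA ⁻¹' V with hOdef
  have hO : IsOpen O := hVo.preimage projA_continuous
  have noloop : ∀ z (k : ℤ), z + ((k:ℝ), (0:ℝ)) ∈ connectedComponentIn O z → k = 0 := by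
    intro z k h
    by_contra hk
    obtain ⟨C, γ, hC, hL, h0, h1, hm⟩ := exists_lip_path hO h
    exact hcon (exists_simple_loop hC hL hk (by rw [h1, h0]) hm)
  have hfV : ∀ q, f q ∈ V ↔ q ∈ V := by
    intro q
    constructor
    · intro h
      rw [← hVinv] at h
      obtain ⟨q', hq', e⟩ := h
      rwa [← f.injective e]
    · intro h
      rw [← hVinv]; exact ⟨q, h, rfl⟩
  have hGO : ∀ z, G z ∈ O ↔ z ∈ O := by
    intro z
    simp only [hOdef, Set.mem_preimage, hG.1, hfV]
  have hzO : ∀ (m : ℤ) z, (G ^ m) z ∈ O ↔ z ∈ O := by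
    intro m
    induction m using Int.induction_on with
    | zero => intro z; rfl
    | succ i ih => intro z; rw [zpow_add, zpow_one]; exact (ih (G z)).trans (hGO z)
    | pred i ih =>
      intro z
      rw [zpow_sub, zpow_one]
      refine (ih (G.symm z)).trans ?_
      rw [← hGO, G.apply_symm_apply]
  have hTG : ∀ (k : ℤ) z, G (z + ((k:ℝ), (0:ℝ))) = G z + ((k:ℝ), (0:ℝ)) := by
    intro k
    have e1 : ∀ (x : ℝ), ((x + 1, 0) : ℝ × ℝ) = (x, 0) + (1, 0) := by intro x; simp
    induction k using Int.induction_on with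
    | zero => intro z; rw [Int.cast_zero, Prod.mk_zero_zero, add_zero, add_zero]
    | succ i ih =>
      intro z
      push_cast at ih ⊢
      rw [e1, ← add_assoc, hG.2, ih, add_assoc]
    | pred i ih =>
      intro z
      push_cast at ih ⊢
      have := e1 (-(i:ℝ) - 1)
      rw [sub_add_cancel] at this
      have h2 := hG.2 (z + (-(i:ℝ) - 1, 0))
      rw [add_assoc, ← this, ih, this, ← add_assoc] at h2
      exact (add_right_cancel h2).symm
  set T : ℤ → (ℝ × ℝ) ≃ₜ (ℝ × ℝ) := fun k => Homeomorph.addRight ((k:ℝ), (0:ℝ)) with hT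
  have hTa : ∀ k z, T k z = z + ((k:ℝ), (0:ℝ)) := fun k z => rfl
  have hcomm : ∀ (k m : ℤ) z, (G ^ m) (z + ((k:ℝ), (0:ℝ))) = (G ^ m) z + ((k:ℝ), (0:ℝ)) := by
    intro k m z
    have h1 : Commute (T k) G := by
      ext1 z
      exact (hTG k z).symm
    have h2 := (h1.zpow_right m)
    have h3 := congrArg (fun H : (ℝ × ℝ) ≃ₜ (ℝ × ℝ) => H z) h2.eq
    exact h3.symm
  have hproj : ∀ (m : ℕ) z, projA ((G ^ (m:ℤ)) z) = f^[m] (projA z) := by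
    intro m
    induction m with
    | zero => intro z; rfl
    | succ i ih =>
      intro z
      push_cast
      rw [zpow_add, zpow_one, Function.iterate_succ_apply, ← hG.1, ← ih]
      rfl
  -- the component
  obtain ⟨q0, hq0⟩ := hVne
  obtain ⟨z0, hz0⟩ : ∃ z0, projA z0 = q0 := by
    obtain ⟨x, hx⟩ := QuotientAddGroup.mk_surjective q0.1
    exact ⟨(x, q0.2), Prod.ext hx rfl⟩
  have hz0O : z0 ∈ O := by simp only [hOdef, Set.mem_preimage, hz0]; exact hq0
  set U := connectedComponentIn O z0 with hU
  have hUO : U ⊆ O := connectedComponentIn_subset _ _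
  have hUo : IsOpen U := hO.connectedComponentIn
  have hz0U : z0 ∈ U := mem_connectedComponentIn hz0O
  have hΨO : ∀ (m k : ℤ) z, (G ^ m) z + ((k:ℝ), (0:ℝ)) ∈ O ↔ z ∈ O := by
    intro m k z
    rw [← hzO m z]
    simp only [hOdef, Set.mem_preimage, projA_add]
  have hΨ : ∀ (m k : ℤ) z, z ∈ U →
      (G ^ m) z + ((k:ℝ), (0:ℝ)) ∈ connectedComponentIn O ((G ^ m) z0 + ((k:ℝ), (0:ℝ))) := by
    intro m k z hz
    set Ψ : (ℝ × ℝ) ≃ₜ (ℝ × ℝ) := (G ^ m).trans (T k) with hΨd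
    have hΨa : ∀ z, Ψ z = (G ^ m) z + ((k:ℝ), (0:ℝ)) := fun z => rfl
    have him : Ψ '' O = O := by
      ext w
      constructor
      · rintro ⟨z, hz, rfl⟩; exact (hΨO m k z).2 hz
      · intro hw
        refine ⟨Ψ.symm w, ?_, Ψ.apply_symm_apply w⟩
        rw [← hΨO m k, ← hΨa, Ψ.apply_symm_apply]; exact hw
    have := Ψ.image_connectedComponentIn hz0O
    rw [him] at this
    rw [← hΨa, ← hΨa, ← this]
    exact ⟨z, hz, rfl⟩
  have hmem : ∀ (m k : ℤ) z, z ∈ U →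
      ((G ^ m) z + ((k:ℝ), (0:ℝ)) ∈ U ↔ (G ^ m) z0 + ((k:ℝ), (0:ℝ)) ∈ U) := by
    intro m k z hz
    have h1 := connectedComponentIn_eq (hΨ m k z hz)
    constructor
    · intro h
      rw [hU, connectedComponentIn_eq h, ← h1]
      exact mem_connectedComponentIn ((hΨO m k z0).2 hz0O)
    · intro h
      rw [hU, connectedComponentIn_eq h, h1]
      exact mem_connectedComponentIn ((hΨO m k z).2 (hUO hz))
  have hcast : ∀ (a b : ℤ) (z : ℝ × ℝ), z + (((a + b : ℤ) : ℝ), (0:ℝ)) = z + ((a:ℝ), (0:ℝ)) + ((b:ℝ), (0:ℝ)) := by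
    intro a b z
    rw [add_assoc]; simp
  set Lam : AddSubgroup (ℤ × ℤ) :=
    { carrier := {p | (G ^ p.1) z0 + ((p.2:ℝ), (0:ℝ)) ∈ U}
      zero_mem' := by
        change (G ^ (0:ℤ)) z0 + (((0:ℤ):ℝ), (0:ℝ)) ∈ U
        rw [zpow_zero, Int.cast_zero, Prod.mk_zero_zero, add_zero]; exact hz0U
      add_mem' := by
        rintro ⟨a, b⟩ ⟨c, d⟩ h1 h2
        change (G ^ (a + c)) z0 + (((b + d : ℤ) :ℝ), (0:ℝ)) ∈ U
        have := (hmem c d _ h1).2 h2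
        rw [hcast, add_comm a c, zpow_add]
        rw [hcomm] at this
        exact this
      neg_mem' := by
        rintro ⟨a, b⟩ h1
        change (G ^ (-a)) z0 + (((-b : ℤ) :ℝ), (0:ℝ)) ∈ U
        refine (hmem (-a) (-b) _ h1).1 ?_
        rw [hcomm, ← hcast, add_neg_cancel, Int.cast_zero, Prod.mk_zero_zero, add_zero]
        have : (G ^ (-a)) ((G ^ a) z0) = z0 := by
          have h : G ^ (-a) * G ^ a = 1 := by rw [← zpow_add, neg_add_cancel, zpow_zero]
          exact congrArg (fun H : (ℝ × ℝ) ≃ₜ (ℝ × ℝ) => H z0) h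
        rw [this]; exact hz0U } with hLam
  have hLmem : ∀ m k : ℤ, (m, k) ∈ Lam ↔ (G ^ m) z0 + ((k:ℝ), (0:ℝ)) ∈ U := fun m k => Iff.rfl
  have hL0 : ∀ k : ℤ, (0, k) ∈ Lam → k = 0 := fun k h => noloop z0 k h
  -- returns
  have ret : ∀ W ⊆ U, IsOpen W → W.Nonempty → ∃ y ∈ W, ∃ (m : ℕ) (j : ℤ), 1 ≤ m ∧
      (G ^ (m:ℤ)) y + ((j:ℝ), (0:ℝ)) ∈ W ∧ ((m:ℤ), j) ∈ Lam := by
    intro W hWU hWo hWn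
    obtain ⟨m, hm, x, ⟨_, ⟨y, hy, rfl⟩, e⟩, ⟨w, hw, e'⟩⟩ := hnw (projA '' W) (projA_open W hWo) (hWn.image _)
    rw [← hproj, ← e'] at e
    obtain ⟨j, hj⟩ := projA_eq e
    rw [hj] at hw
    exact ⟨y, hy, m, j, hm, hw, (hmem _ _ _ (hWU hy)).1 (hWU hw)⟩
  have hex : ∃ n : ℕ, 1 ≤ n ∧ ∃ k : ℤ, ((n:ℤ), k) ∈ Lam := by
    obtain ⟨y, -, m, j, hm, -, hj⟩ := ret U subset_rfl hUo ⟨z0, hz0U⟩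
    exact ⟨m, hm, j, hj⟩
  classical
  obtain ⟨n, ⟨hn, k, hnk⟩, hnmin⟩ : ∃ n : ℕ, (1 ≤ n ∧ ∃ k : ℤ, ((n:ℤ), k) ∈ Lam) ∧
      ∀ m : ℕ, (1 ≤ m ∧ ∃ k : ℤ, ((m:ℤ), k) ∈ Lam) → n ≤ m :=
    ⟨Nat.find hex, Nat.find_spec hex, fun m hm => Nat.find_min' hex hm⟩
  have hcyc : ∀ m j : ℤ, (m, j) ∈ Lam → ∃ q : ℤ, m = q * n ∧ j = q * k := by
    intro m j h
    refine ⟨m / n, ?_⟩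
    have h1 := Lam.sub_mem h (Lam.zsmul_mem hnk (m / n))
    simp only [Prod.smul_mk, Prod.mk_sub_mk, smul_eq_mul] at h1
    have hn0 : (0:ℤ) < n := by exact_mod_cast hn
    have e : m - m / n * n = m % n := by
      have := Int.mul_ediv_add_emod m n
      linarith
    rw [e] at h1
    have hr0 := Int.emod_nonneg m hn0.ne'
    have hr1 := Int.emod_lt_of_pos m hn0
    have hz : m % n = 0 := by
      by_contra hne
      obtain ⟨r, hr⟩ := Int.eq_ofNat_of_zero_le hr0
      rw [hr] at h1 hr1 hne
      have := hnmin r ⟨by omega, _, h1⟩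
      omega
    rw [hz] at h1 e
    have := hL0 _ h1
    exact ⟨by linarith, by linarith⟩
  set F : (ℝ × ℝ) ≃ₜ (ℝ × ℝ) := (G ^ (n:ℤ)).trans (T k) with hF
  have hFa : ∀ z, F z = (G ^ (n:ℤ)) z + ((k:ℝ), (0:ℝ)) := fun z => rfl
  have hFq : ∀ (q : ℕ) z, F^[q] z = (G ^ ((q:ℤ) * n)) z + (((q * k : ℤ) : ℝ), (0:ℝ)) := by
    intro q
    induction q with
    | zero => intro z; simp
    | succ i ih =>
      intro z
      rw [Function.iterate_succ_apply', ih, hFa, hcomm, ← hcast]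
      have : ((i + 1 : ℕ) : ℤ) * n = n + i * n := by push_cast; ring
      rw [this, zpow_add]
      have : ((i + 1 : ℕ) : ℤ) * k = i * k + k := by push_cast; ring
      rw [this]
      rfl
  have retF : ∀ W ⊆ U, IsOpen W → W.Nonempty → ∃ y ∈ W, ∃ q : ℕ, 1 ≤ q ∧ F^[q] y ∈ W := by
    intro W hWU hWo hWn
    obtain ⟨y, hy, m, j, hm, hw, hl⟩ := ret W hWU hWo hWn
    obtain ⟨q, hq, hj⟩ := hcyc _ _ hl
    have hq0 : 0 < q := by
      have hn0 : (0:ℤ) < n := by exact_mod_cast hn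
      have hm0 : (0:ℤ) < m := by exact_mod_cast hm
      rw [hq] at hm0
      exact pos_of_mul_pos_left hm0 hn0.le
    obtain ⟨p, rfl⟩ := Int.eq_ofNat_of_zero_le hq0.le
    refine ⟨y, hy, p, by omega, ?_⟩
    rw [hFq, ← hq, ← hj]; exact hw
  have retF2 : ∀ W ⊆ U, IsOpen W → W.Nonempty → ∃ y ∈ W, ∃ q : ℕ, 1 ≤ q ∧ F^[2 * q] y ∈ W := by
    intro W hWU hWo hWn
    obtain ⟨y, hy, q, hq, hyq⟩ := retF W hWU hWo hWn
    rcases Nat.even_or_odd' q with ⟨p, hp | hp⟩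
    · exact ⟨y, hy, p, by omega, by rw [← hp]; exact hyq⟩
    · have hFc : Continuous (F^[q]) := F.continuous.iterate q
      obtain ⟨x, hx, q', hq', hxq⟩ := retF (W ∩ F^[q] ⁻¹' W) (Set.inter_subset_left.trans hWU)
        (hWo.inter (hWo.preimage hFc)) ⟨y, hy, hyq⟩
      rcases Nat.even_or_odd' q' with ⟨p', hp' | hp'⟩
      · exact ⟨x, hx.1, p', by omega, by rw [← hp']; exact hxq.1⟩
      · refine ⟨x, hx.1, p + p' + 1, by omega, ?_⟩
        have : 2 * (p + p' + 1) = q + q' := by omega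
        rw [this, Function.iterate_add_apply]
        exact hxq.2
  -- transfer to the complex plane
  set e : ℂ ≃ₜ (ℝ × ℝ) := Complex.equivRealProdCLM.toHomeomorph with he
  set h0 : ℂ ≃ₜ ℂ := (e.trans F).trans e.symm with hh0
  have hh0a : ∀ z, h0 z = e.symm (F (e z)) := fun z => rfl
  have hiter : ∀ (q : ℕ) z, (h0.trans h0)^[q] z = e.symm (F^[2 * q] (e z)) := by
    intro q
    induction q with
    | zero => intro z; simp
    | succ i ih =>
      intro z
      rw [Function.iterate_succ_apply', ih, Homeomorph.trans_apply, hh0a, hh0a, e.apply_symm_apply,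
        e.apply_symm_apply, mul_add, mul_one, Function.iterate_succ_apply', Function.iterate_succ_apply']
  obtain ⟨L, hL⟩ := ol_sq h0
  refine brouwer_nonwandering (h0.trans h0) ?_ (L := L) hL (e.symm z0) ?_
  · intro z hz
    have h1 := hiter 1 z
    rw [Function.iterate_one, hz, e.eq_symm_apply, hFq] at h1
    apply hnp
    refine ⟨projA (e z), 2 * n, by omega, ?_⟩
    have h2 := congrArg projA h1
    rw [projA_add] at h2
    have : ((2 * 1 : ℕ) : ℤ) * n = ((2 * n : ℕ) : ℤ) := by push_cast; ring
    rw [this, hproj] at h2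
    exact h2.symm
  · intro ε hε
    obtain ⟨y, hy, q, hq, hyq⟩ := retF2 (e.symm ⁻¹' Metric.ball (e.symm z0) ε ∩ U) Set.inter_subset_right
      ((Metric.isOpen_ball.preimage e.symm.continuous).inter hUo)
      ⟨z0, Metric.mem_ball_self hε, hz0U⟩
    refine ⟨e.symm y, q, hq, hy.1, ?_⟩
    rw [hiter, e.apply_symm_apply]
    exact hyq.1
end
end
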